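/- Let μ∈𝓜. Then 𝓘(μ)<+∞ if and only if there exists Ψ^μ∈𝓓¹_{μ(σ)} such that μ(ι)_t+μ(f)_x = −(μ(σ)Ψ^μ_x)_x holds weakly; in that case Ψ^μ is unique and 𝓘(μ) = (1/2)‖μ(ι)_t+μ(f)_x‖²_{𝓓⁻¹_{μ(σ)}} = (1/2)‖Ψ^μ‖²_{𝓓¹_{μ(σ)}}. Furthermore, if μ(σ)≥r for some constant r>0, then 𝓘(μ)<+∞ if and only if there exists G^μ∈L²([0,T]×ℝ) such that μ(ι)_t+μ(f)_x = −G^μ_x holds weakly; in that case Ψ^μ_x can be identified with a function in L²([0,T]×ℝ), G^μ = μ(σ)Ψ^μ_x, and 𝓘(μ) = (1/2)∫dt dx (G^μ(t,x))²/μ_{t,x}(σ). -/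

import Mathlib

/-!
The equivalence is the Riesz representation theorem in `L²(a dt dx)` on the strip `[0,T] × ℝ`, with
weight `a = μ(σ)`.  Write `g φ = φ_x ∈ L²(a dt dx)` (`gradL`) and `l φ = -⟨⟨μ(ι), φ_t⟩⟩ -
⟨⟨μ(f), φ_x⟩⟩` (`ellL`), both linear in the test function `φ`, so that `𝓘(μ) = sup (l φ - ½‖g φ‖²)`
(`iSup_test_eq`).  If the supremum is finite, rescaling `φ` gives `|l φ| ≤ C ‖g φ‖`, and Riesz on
the closure of the range of `g` yields `P` with `l φ = ⟨P, g φ⟩` (`exists_riesz`).  Conversely, if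
such a `P` exists then `l φ - ½‖g φ‖² = ½‖P‖² - ½‖P - g φ‖²`, whose supremum is `½‖P‖²` since `P`
is a limit of gradients (`iSup_eq_of_riesz`); uniqueness is `riesz_unique`.

The space `𝓓¹_a` is defined by test functions on `[0,T] × ℝ`, while `𝓘` only uses those vanishing
at `t = 0, T`.  Multiplication by a cutoff in time shows that the latter are dense for the
seminorm of `𝓓¹_a`, in which only `x`-derivatives appear (`toLp_mem_closure`).

If `a ≥ r > 0`, then `P ∈ L²` and the flux `a P` is an `L²` function representing `l`; in the other
direction a representation by `G ∈ L²` bounds the supremum by Young's inequality (`le_of_L2_rep`).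
The flux is unique because an `L²` function `h` with `h_x = 0` weakly vanishes
(`ae_zero_of_weak`): the `x`-primitive of `ψ(t,x) - ψ(t,x-n)` is a test function, so
`⟨⟨h, ψ⟩⟩ = ⟨⟨h, ψ(·, · - n)⟩⟩`, which tends to `0` as `n → ∞`.
-/

open MeasureTheory Set Filter Topology
open scoped ENNReal Classical

noncomputable section

namespace GammaSCL

/-! ### Spatial test functions and the metric on `U` -/

/-- Smooth compactly supported test functions on `ℝ`, supported in `(-N, N)`. -/
structure STest (N : ℝ) where
  toFun : ℝ → ℝ
  smooth : ContDiff ℝ (⊤ : ℕ∞) toFun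
  cpt : HasCompactSupport toFun
  supp : Function.support toFun ⊆ Ioo (-N) N

/-- The negative Sobolev seminorm `‖w‖_{-1,N}`. -/
def negNorm (N : ℝ) (w : ℝ → ℝ) : ℝ :=
  sSup { r : ℝ | ∃ φ : STest N, (∫ x, deriv φ.toFun x ^ 2) = 1 ∧ r = ∫ x, w x * φ.toFun x }

/-- The metric `d_U` on the space `U` of measurable `[0,1]`-valued functions. -/
def dU (u v : ℝ → ℝ) : ℝ :=
  ∑' n : ℕ, (2 : ℝ)⁻¹ ^ (n + 1) *
    (negNorm ((n : ℝ) + 1) (fun x => u x - v x) /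
      (1 + negNorm ((n : ℝ) + 1) (fun x => u x - v x)))

/-- The space `𝒰 = C([0,T]; U)`. -/
structure cU (T : ℝ) where
  toFun : ℝ × ℝ → ℝ
  meas : Measurable toFun
  mem01 : ∀ p, toFun p ∈ Icc (0:ℝ) 1
  cont : ∀ t₀ ∈ Icc (0:ℝ) T, ∀ δ > 0, ∃ ζ > 0, ∀ t ∈ Icc (0:ℝ) T,
    |t - t₀| < ζ → dU (fun x => toFun (t, x)) (fun x => toFun (t₀, x)) < δ

/-- The uniform metric `d_𝒰` on `𝒰`. -/
def dcU (T : ℝ) (u v : cU T) : ℝ :=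
  sSup { r : ℝ | ∃ t ∈ Icc (0:ℝ) T,
    r = dU (fun x => u.toFun (t, x)) (fun x => v.toFun (t, x)) }

/-- The metric `d_𝒳` on `𝒳`. -/
def dX (T : ℝ) (u v : cU T) : ℝ :=
  (∑' n : ℕ, (2 : ℝ)⁻¹ ^ (n + 1) *
    ∫ p in Icc (0:ℝ) T ×ˢ Icc (-((n : ℝ) + 1)) ((n : ℝ) + 1), |u.toFun p - v.toFun p|) +
  dcU T u v

/-! ### Space-time test functions -/

/-- Smooth test functions compactly supported in `(0,T) × ℝ`. -/
structure TTest (T : ℝ) where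
  toFun : ℝ × ℝ → ℝ
  smooth : ContDiff ℝ (⊤ : ℕ∞) toFun
  cpt : HasCompactSupport toFun
  supp : Function.support toFun ⊆ Ioo (0 : ℝ) T ×ˢ (univ : Set ℝ)

/-- Smooth test functions compactly supported in `[0,T] × ℝ` (no vanishing at `t = 0, T`). -/
structure TTestC where
  toFun : ℝ × ℝ → ℝ
  smooth : ContDiff ℝ (⊤ : ℕ∞) toFun
  cpt : HasCompactSupport toFun

/-- Partial derivative in `t`. -/
def ptF (ψ : ℝ × ℝ → ℝ) : ℝ × ℝ → ℝ := fun p => fderiv ℝ ψ p (1, 0)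
/-- Partial derivative in `x`. -/
def pxF (ψ : ℝ × ℝ → ℝ) : ℝ × ℝ → ℝ := fun p => fderiv ℝ ψ p (0, 1)

/-- The `L²([0,T] × ℝ)` inner product `⟨⟨g, h⟩⟩`. -/
def pair (T : ℝ) (g h : ℝ × ℝ → ℝ) : ℝ :=
  ∫ p in Icc (0:ℝ) T ×ˢ (univ : Set ℝ), g p * h p

/-! ### Weak derivatives -/

/-- Locally square integrable on `[0,T] × ℝ`. -/
def L2loc (T : ℝ) (w : ℝ × ℝ → ℝ) : Prop :=
  Measurable w ∧ ∀ R > 0, IntegrableOn (fun p => w p ^ 2) (Icc (0:ℝ) T ×ˢ Icc (-R) R)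

/-- `w` is the weak `x`-derivative of `u`. -/
def HasWeakDx (T : ℝ) (u w : ℝ × ℝ → ℝ) : Prop :=
  ∀ φ : TTest T, pair T u (pxF φ.toFun) = - pair T w φ.toFun

/-- `u` admits a locally square integrable weak `x`-derivative. -/
def hasDx (T : ℝ) (u : ℝ × ℝ → ℝ) : Prop := ∃ w, L2loc T w ∧ HasWeakDx T u w

/-- A choice of weak `x`-derivative. -/
def wDx (T : ℝ) (u : ℝ × ℝ → ℝ) : ℝ × ℝ → ℝ :=
  if h : hasDx T u then h.choose else 0

/-! ### The parabolic cost functional -/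

/-- The expression inside the supremum defining `I_ε`. -/
def IexprW (f D σ : ℝ → ℝ) (T ε : ℝ) (u w : ℝ × ℝ → ℝ) (φ : TTest T) : ℝ :=
  - pair T u (ptF φ.toFun) - pair T (fun p => f (u p)) (pxF φ.toFun)
    + ε / 2 * pair T (fun p => D (u p) * w p) (pxF φ.toFun)
    - 1 / 2 * pair T (fun p => σ (u p) * pxF φ.toFun p) (pxF φ.toFun)

/-- The cost functional `I_ε : 𝒰 → [0,+∞]`. -/
def Ieps (f D σ : ℝ → ℝ) (T ε : ℝ) (u : cU T) : ℝ≥0∞ :=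
  if hasDx T u.toFun then
    ⨆ φ : TTest T, ENNReal.ofReal (IexprW f D σ T ε u.toFun (wDx T u.toFun) φ)
  else ⊤

/-- The rescaled cost functional `H_ε := ε⁻¹ I_ε`. -/
def Heps (f D σ : ℝ → ℝ) (T ε : ℝ) (u : cU T) : ℝ≥0∞ :=
  ENNReal.ofReal ε⁻¹ * Ieps f D σ T ε u

/-! ### Young measures -/

/-- The space `𝓜` of Young measures. -/
structure YM (T : ℝ) where
  m : ℝ × ℝ → Measure ℝ
  prob : ∀ p, IsProbabilityMeasure (m p)
  supp01 : ∀ p, m p (Icc (0:ℝ) 1)ᶜ = 0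
  meas : ∀ F : ℝ → ℝ, Continuous F → Measurable fun p => ∫ l, F l ∂ m p
  bar_mem : ∀ p, (∫ l, l ∂ m p) ∈ Icc (0:ℝ) 1
  bar_cont : ∀ t₀ ∈ Icc (0:ℝ) T, ∀ δ > 0, ∃ ζ > 0, ∀ t ∈ Icc (0:ℝ) T,
    |t - t₀| < ζ →
      dU (fun x => ∫ l, l ∂ m (t, x)) (fun x => ∫ l, l ∂ m (t₀, x)) < δ

/-- The moment `μ(F)`. -/
def YM.mom {T : ℝ} (μ : YM T) (F : ℝ → ℝ) : ℝ × ℝ → ℝ := fun p => ∫ l, F l ∂ μ.m p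

/-- The barycenter `μ(ι)` of a Young measure, as an element of `𝒰`. -/
def YM.bar {T : ℝ} (μ : YM T) : cU T :=
  ⟨fun p => ∫ l, l ∂ μ.m p, μ.meas (fun l => l) continuous_id', μ.bar_mem, μ.bar_cont⟩

/-- The metric `d_𝓜 = d_w + d_𝒰(μ(ι), ν(ι))`. -/
def dM (T : ℝ) (dw : YM T → YM T → ℝ) (μ ν : YM T) : ℝ :=
  dw μ ν + dcU T μ.bar ν.bar

/-- `dw` is a distance generating the weak* topology on Young measures. -/
def GeneratesWeakStar (T : ℝ) (dw : YM T → YM T → ℝ) : Prop :=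
  (∀ μ ν, dw μ ν = dw ν μ) ∧ (∀ μ ν, 0 ≤ dw μ ν) ∧
  ∀ (μ : ℕ → YM T) (ν : YM T),
    Tendsto (fun n => dw (μ n) ν) atTop (𝓝 0) ↔
      ∀ g : ℝ × (ℝ × ℝ) → ℝ, Continuous g → HasCompactSupport g →
        Tendsto
          (fun n => ∫ p in Icc (0:ℝ) T ×ˢ (univ : Set ℝ), ∫ l, g (l, p) ∂ (μ n).m p)
          atTop
          (𝓝 (∫ p in Icc (0:ℝ) T ×ˢ (univ : Set ℝ), ∫ l, g (l, p) ∂ ν.m p))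

/-- The lift `𝓘_ε` of `I_ε` to Young measures. -/
def calIeps (f D σ : ℝ → ℝ) (T ε : ℝ) (μ : YM T) : ℝ≥0∞ :=
  if h : ∃ u : cU T, ∀ p, μ.m p = Measure.dirac (u.toFun p) then
    Ieps f D σ T ε h.choose
  else ⊤

/-- The limiting functional `𝓘` on Young measures. -/
def calI (f σ : ℝ → ℝ) (T : ℝ) (μ : YM T) : ℝ≥0∞ :=
  ⨆ φ : TTest T, ENNReal.ofReal
    (- pair T (μ.mom (fun l => l)) (ptF φ.toFun) - pair T (μ.mom f) (pxF φ.toFun)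
      - 1 / 2 * pair T (fun p => μ.mom σ p * pxF φ.toFun p) (pxF φ.toFun))

/-! ### Γ-convergence via sequences -/

/-- Sequential compactness with respect to a distance function. -/
def SeqCompactIn {α : Type*} (d : α → α → ℝ) (K : Set α) : Prop :=
  ∀ x : ℕ → α, (∀ n, x n ∈ K) → ∃ y ∈ K, ∃ s : ℕ → ℕ, StrictMono s ∧
    Tendsto (fun n => d (x (s n)) y) atTop (𝓝 0)

/-- Equicoercivity of a family of functionals. -/
def Equicoercive {α : Type*} (d : α → α → ℝ) (F : ℝ → α → ℝ≥0∞) : Prop :=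
  ∀ M : ℝ, 0 < M → ∃ K : Set α, SeqCompactIn d K ∧
    ∀ ε ∈ Ioc (0:ℝ) 1, { x : α | F ε x ≤ ENNReal.ofReal M } ⊆ K

/-- The Γ-liminf inequality `Γ-liminf F_ε ≥ G`. -/
def GammaLiminfGE {α : Type*} (d : α → α → ℝ) (F : ℝ → α → ℝ≥0∞) (G : α → ℝ≥0∞) : Prop :=
  ∀ (x : α) (e : ℕ → ℝ) (xs : ℕ → α), (∀ n, 0 < e n) → Tendsto e atTop (𝓝 0) →
    Tendsto (fun n => d (xs n) x) atTop (𝓝 0) →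
    G x ≤ Filter.liminf (fun n => F (e n) (xs n)) atTop

/-- The Γ-limsup inequality `Γ-limsup F_ε ≤ G`. -/
def GammaLimsupLE {α : Type*} (d : α → α → ℝ) (F : ℝ → α → ℝ≥0∞) (G : α → ℝ≥0∞) : Prop :=
  ∀ (x : α) (e : ℕ → ℝ), (∀ n, 0 < e n) → Tendsto e atTop (𝓝 0) →
    ∃ xs : ℕ → α, Tendsto (fun n => d (xs n) x) atTop (𝓝 0) ∧
      Filter.limsup (fun n => F (e n) (xs n)) atTop ≤ G x

/-- Γ-convergence of `F_ε` to `G`. -/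
def GammaConvergesTo {α : Type*} (d : α → α → ℝ) (F : ℝ → α → ℝ≥0∞) (G : α → ℝ≥0∞) : Prop :=
  GammaLiminfGE d F G ∧ GammaLimsupLE d F G

/-! ### Entropies, entropy production, kinetic measures -/

/-- Weak solutions to `u_t + f(u)_x = 0`. -/
def IsWeakSolution (f : ℝ → ℝ) (T : ℝ) (u : ℝ × ℝ → ℝ) : Prop :=
  ∀ φ : TTest T, pair T u (ptF φ.toFun) + pair T (fun p => f (u p)) (pxF φ.toFun) = 0

/-- Derivative within `[0,1]`. -/
def dIcc (g : ℝ → ℝ) : ℝ → ℝ := fun v => derivWithin g (Icc 0 1) v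

/-- An entropy–entropy flux pair. -/
structure Entropy (f : ℝ → ℝ) where
  eta : ℝ → ℝ
  q : ℝ → ℝ
  smooth : ContDiffOn ℝ 2 eta (Icc 0 1)
  qcont : ContinuousOn q (Icc 0 1)
  flux : ∀ a ∈ Icc (0:ℝ) 1, ∀ b ∈ Icc (0:ℝ) 1,
    q b - q a = ∫ v in a..b, dIcc eta v * deriv f v

/-- The `η`-entropy production `℘_{η,u}(φ)`. -/
def entProd (f : ℝ → ℝ) (T : ℝ) (E : Entropy f) (u : ℝ × ℝ → ℝ) (φ : TTest T) : ℝ :=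
  - pair T (fun p => E.eta (u p)) (ptF φ.toFun) - pair T (fun p => E.q (u p)) (pxF φ.toFun)

/-- `‖℘_{η,u}‖_{TV,L}`. -/
def TVabs (f : ℝ → ℝ) (T : ℝ) (E : Entropy f) (L : ℝ) (u : ℝ × ℝ → ℝ) : ℝ≥0∞ :=
  ⨆ φ : { φ : TTest T // Function.support φ.toFun ⊆ Ioo (0:ℝ) T ×ˢ Ioo (-L) L ∧
          ∀ p, |φ.toFun p| ≤ 1 },
    ENNReal.ofReal (entProd f T E u φ.1)

/-- `‖℘⁺_{η,u}‖_{TV,L}`. -/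
def TVpos (f : ℝ → ℝ) (T : ℝ) (E : Entropy f) (L : ℝ) (u : ℝ × ℝ → ℝ) : ℝ≥0∞ :=
  ⨆ φ : { φ : TTest T // Function.support φ.toFun ⊆ Ioo (0:ℝ) T ×ˢ Ioo (-L) L ∧
          ∀ p, φ.toFun p ∈ Icc (0:ℝ) 1 },
    ENNReal.ofReal (entProd f T E u φ.1)

/-- Entropy-measure solutions: every entropy production extends to a Radon measure. -/
def EMsol (f : ℝ → ℝ) (T : ℝ) (u : cU T) : Prop :=
  IsWeakSolution f T u.toFun ∧ ∀ E : Entropy f, ∀ L > 0, TVabs f T E L u.toFun ≠ ⊤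

/-- `v`-derivative (within `[0,1]`) of a sampler. -/
def dv1 (θ : ℝ → ℝ × ℝ → ℝ) : ℝ → ℝ × ℝ → ℝ :=
  fun v p => derivWithin (fun w => θ w p) (Icc 0 1) v

/-- An entropy sampler together with a conjugated entropy flux sampler. -/
structure Sampler (f : ℝ → ℝ) (T : ℝ) where
  θ : ℝ → ℝ × ℝ → ℝ
  Q : ℝ → ℝ × ℝ → ℝ
  cpt : HasCompactSupport (Function.uncurry θ)
  supp : Function.support (Function.uncurry θ) ⊆
    Icc (0:ℝ) 1 ×ˢ (Ioo (0:ℝ) T ×ˢ (univ : Set ℝ))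
  smooth_p : ∀ v, ContDiff ℝ (⊤ : ℕ∞) (θ v)
  smooth_v : ∀ p, ContDiffOn ℝ 2 (fun v => θ v p) (Icc 0 1)
  cont0 : Continuous (Function.uncurry θ)
  cont1 : ContinuousOn (Function.uncurry (dv1 θ)) (Icc (0:ℝ) 1 ×ˢ (univ : Set (ℝ × ℝ)))
  cont2 : ContinuousOn (Function.uncurry (dv1 (dv1 θ))) (Icc (0:ℝ) 1 ×ˢ (univ : Set (ℝ × ℝ)))
  Qsmooth : ∀ v, ContDiff ℝ 1 (Q v)
  Qflux : ∀ (p : ℝ × ℝ), ∀ a ∈ Icc (0:ℝ) 1, ∀ b ∈ Icc (0:ℝ) 1,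
    Q b p - Q a p = ∫ v in a..b, dv1 θ v p * deriv f v

/-- The `ϑ`-sampled entropy production `P_{ϑ,u}`. -/
def Ptheta (f : ℝ → ℝ) (T : ℝ) (S : Sampler f T) (u : ℝ × ℝ → ℝ) : ℝ :=
  - ∫ p in Icc (0:ℝ) T ×ˢ (univ : Set ℝ),
      (fderiv ℝ (S.θ (u p)) p (1, 0) + fderiv ℝ (S.Q (u p)) p (0, 1))

/-- `(ρp, ρn)` is a decomposition of the kinetic measure `ϱ_u` of a weak solution `u`. -/
def IsKineticMeasure (f : ℝ → ℝ) (T : ℝ) (u : ℝ × ℝ → ℝ)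
    (ρp ρn : ℝ → Measure (ℝ × ℝ)) : Prop :=
  (∀ v, ρp v ((Ioo (0:ℝ) T ×ˢ (univ : Set ℝ))ᶜ) = 0 ∧
        ρn v ((Ioo (0:ℝ) T ×ˢ (univ : Set ℝ))ᶜ) = 0) ∧
  (∀ L > 0, ∃ C : ℝ≥0∞, C ≠ ⊤ ∧ ∀ v ∈ Icc (0:ℝ) 1,
      ρp v (Icc (0:ℝ) T ×ˢ Icc (-L) L) + ρn v (Icc (0:ℝ) T ×ˢ Icc (-L) L) ≤ C) ∧
  (∀ g : ℝ × ℝ → ℝ, Continuous g → HasCompactSupport g →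
      Measurable fun v => (∫ p, g p ∂ ρp v) - ∫ p, g p ∂ ρn v) ∧
  ∀ S : Sampler f T, Ptheta f T S u =
    ∫ v in Icc (0:ℝ) 1,
      ((∫ p, dv1 (dv1 S.θ) v p ∂ ρp v) - ∫ p, dv1 (dv1 S.θ) v p ∂ ρn v)

/-- The Γ-entropy cost functional `H`. -/
def Hfun (f D σ : ℝ → ℝ) (T : ℝ) (u : cU T) : ℝ≥0∞ :=
  if IsWeakSolution f T u.toFun then
    ⨅ ρ : { ρ : (ℝ → Measure (ℝ × ℝ)) × (ℝ → Measure (ℝ × ℝ)) //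
            IsKineticMeasure f T u.toFun ρ.1 ρ.2 },
      ∫⁻ v in Icc (0:ℝ) 1, ENNReal.ofReal (D v / σ v) * ρ.1.1 v univ
  else ⊤

/-- Entropic solutions. -/
def EntropicSol (f : ℝ → ℝ) (T : ℝ) (u : cU T) : Prop :=
  IsWeakSolution f T u.toFun ∧
  ∀ E : Entropy f, (∀ v ∈ Icc (0:ℝ) 1, 0 ≤ dIcc (dIcc E.eta) v) →
    ∀ φ : TTest T, (∀ p, 0 ≤ φ.toFun p) → entProd f T E u.toFun φ ≤ 0

/-- There is no interval in which `f` is affine. -/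
def NoAffinePiece (f : ℝ → ℝ) : Prop :=
  ∀ a b : ℝ, 0 ≤ a → a < b → b ≤ 1 →
    ¬ ∃ c d : ℝ, ∀ v ∈ Icc a b, f v = c * v + d

/-- Entropy-splittable solutions. -/
def Splittable (f : ℝ → ℝ) (T : ℝ) (u : cU T) : Prop :=
  EMsol f T u ∧
  ∃ Ep En : Set (ℝ × ℝ), IsClosed Ep ∧ IsClosed En ∧
    Ep ⊆ Icc (0:ℝ) T ×ˢ (univ : Set ℝ) ∧ En ⊆ Icc (0:ℝ) T ×ˢ (univ : Set ℝ) ∧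
    (∃ ρp ρn : ℝ → Measure (ℝ × ℝ), IsKineticMeasure f T u.toFun ρp ρn ∧
      ∀ᵐ v ∂(volume.restrict (Icc (0:ℝ) 1)), ρp v Epᶜ = 0 ∧ ρn v Enᶜ = 0) ∧
    ∀ L > 0, ∀ a b : ℝ, 0 ≤ a → a < b → b ≤ T →
      ∃ a' b' : ℝ, a ≤ a' ∧ a' < b' ∧ b' ≤ b ∧
        ∀ t ∈ Ioo a' b', ∀ x ∈ Icc (-L) L, (t, x) ∉ Ep ∩ En

/-- Nice solutions with respect to `σ`: the set `𝒮_σ`. -/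
def NiceSol (f D σ : ℝ → ℝ) (T : ℝ) (u : cU T) : Prop :=
  Splittable f T u ∧ Hfun f D σ T u ≠ ⊤ ∧
  ∀ L > 0, ∃ δ > 0,
    ∀ᵐ p ∂(volume.restrict (Icc (0:ℝ) T ×ˢ Icc (-L) L)), δ ≤ σ (u.toFun p)

/-- The relaxed functional `H̄`. -/
def Hbar (f D σ : ℝ → ℝ) (T : ℝ) (u : cU T) : ℝ≥0∞ :=
  ⨅ s : { s : ℕ → cU T // (∀ n, NiceSol f D σ T (s n)) ∧
          Tendsto (fun n => dX T (s n) u) atTop (𝓝 0) },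
    Filter.liminf (fun n => Hfun f D σ T (s.1 n)) atTop

/-- Continuity in time with values in `L¹_loc(ℝ)`. -/
def ContL1 (T : ℝ) (u : ℝ × ℝ → ℝ) : Prop :=
  ∀ t₀ ∈ Icc (0:ℝ) T, ∀ R > 0, ∀ δ > 0, ∃ ζ > 0, ∀ t ∈ Icc (0:ℝ) T,
    |t - t₀| < ζ → (∫ x in Icc (-R) R, |u (t, x) - u (t₀, x)|) < δ

/-! ### The relaxation `R_{f,σ}` and the Γ-limit `I` on `𝒰` -/

/-- The function `R_{f,σ}(w,c)`. -/
def Rfs (f σ : ℝ → ℝ) (w c : ℝ) : ℝ≥0∞ :=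
  ⨅ ν : { ν : Measure ℝ // IsProbabilityMeasure ν ∧ ν (Icc (0:ℝ) 1)ᶜ = 0 ∧ (∫ l, l ∂ν) = w },
    if (∫ l, σ l ∂ν.1) = 0 then (if (∫ l, f l ∂ν.1) = c then 0 else ⊤)
    else ENNReal.ofReal ((∫ l, f l ∂ν.1 - c) ^ 2 / ∫ l, σ l ∂ν.1)

/-- The Γ-limit `I` of `I_ε` on `𝒰`. -/
def Ilim (f σ : ℝ → ℝ) (T : ℝ) (u : cU T) : ℝ≥0∞ :=
  ⨅ Φ : { Φ : ℝ × ℝ → ℝ // L2loc T Φ ∧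
          ∀ φ : TTest T, - pair T Φ (pxF φ.toFun) = pair T u.toFun (ptF φ.toFun) },
    ∫⁻ p in Icc (0:ℝ) T ×ˢ (univ : Set ℝ), Rfs f σ (u.toFun p) (Φ.1 p)

/-! ### The classes `𝓜_g` and `𝓜₀` -/

/-- The class `𝓜_g`. -/
def Mg (f σ : ℝ → ℝ) (T : ℝ) (μ : YM T) : Prop :=
  calI f σ T μ ≠ ⊤ ∧
  ∃ r > 0, ∃ L > 0, ∃ ν : Measure ℝ, IsProbabilityMeasure ν ∧ ν (Icc (0:ℝ) 1)ᶜ = 0 ∧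
    (∀ p : ℝ × ℝ, p.1 ∈ Icc (0:ℝ) T → r ≤ μ.mom (fun l => l) p ∧ r ≤ μ.mom σ p) ∧
    ∀ p : ℝ × ℝ, p.1 ∈ Icc (0:ℝ) T → L < |p.2| → μ.m p = ν

/-- The class `𝓜₀` of Dirac masses of smooth functions in `𝓜_g`. -/
def M0 (f σ : ℝ → ℝ) (T : ℝ) (μ : YM T) : Prop :=
  Mg f σ T μ ∧ ∃ u : ℝ × ℝ → ℝ, ContDiff ℝ 1 u ∧ (∀ p, u p ∈ Icc (0:ℝ) 1) ∧
    ∀ p, μ.m p = Measure.dirac (u p)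

/-! ### The spaces `𝓓¹_a` and the Riesz representation of the cost -/

/-- `P` represents (the gradient of) an element of the Hilbert space `𝓓¹_a`. -/
def InD1 (T : ℝ) (a P : ℝ × ℝ → ℝ) : Prop :=
  Measurable P ∧ IntegrableOn (fun p => a p * P p ^ 2) (Icc (0:ℝ) T ×ˢ (univ : Set ℝ)) ∧
  ∀ δ > 0, ∃ φ : TTestC,
    (∫ p in Icc (0:ℝ) T ×ˢ (univ : Set ℝ), a p * (P p - pxF φ.toFun p) ^ 2) < δ

/-- The extended linear functional `ℓ^u_ε(φ)` with boundary terms. -/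
def ellC (f D : ℝ → ℝ) (T ε : ℝ) (u w : ℝ × ℝ → ℝ) (φ : TTestC) : ℝ :=
  (∫ x, u (T, x) * φ.toFun (T, x)) - (∫ x, u (0, x) * φ.toFun (0, x))
    - pair T u (ptF φ.toFun) - pair T (fun p => f (u p)) (pxF φ.toFun)
    + ε / 2 * pair T (fun p => D (u p) * w p) (pxF φ.toFun)

/-- `u` is a weak solution to `u_t + f(u)_x = (ε/2)(D(u)u_x)_x - (σ(u)Ψ_x)_x` with `Ψ_x = P`. -/
def rieszEq (f D σ : ℝ → ℝ) (T ε : ℝ) (u w P : ℝ × ℝ → ℝ) : Prop :=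
  ∀ φ : TTestC,
    (∫ x, u (T, x) * φ.toFun (T, x)) - (∫ x, u (0, x) * φ.toFun (0, x))
      - (pair T u (ptF φ.toFun)
        + pair T (fun p => f (u p) - ε / 2 * (D (u p) * w p) + σ (u p) * P p)
            (pxF φ.toFun)) = 0

/-- `μ(ι)_t + μ(f)_x = -(μ(σ) P)_x` weakly. -/
def calIEq (f σ : ℝ → ℝ) (T : ℝ) (μ : YM T) (P : ℝ × ℝ → ℝ) : Prop :=
  ∀ φ : TTest T,
    - pair T (μ.mom (fun l => l)) (ptF φ.toFun) - pair T (μ.mom f) (pxF φ.toFun)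
      = pair T (fun p => μ.mom σ p * P p) (pxF φ.toFun)

/-! ### The cost functional on `L¹_loc` -/

/-- Locally integrable on `[0,T] × ℝ`. -/
def L1loc (T : ℝ) (u : ℝ × ℝ → ℝ) : Prop :=
  Measurable u ∧ ∀ R > 0, IntegrableOn u (Icc (0:ℝ) T ×ˢ Icc (-R) R)

/-- The cost functional `Î_ε` on `L¹_loc([0,T] × ℝ)`. -/
def Ihat (f D σ : ℝ → ℝ) (T ε : ℝ) (u : ℝ × ℝ → ℝ) : ℝ≥0∞ :=
  if L2loc T (fun p => f (u p)) ∧ hasDx T u then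
    ⨆ φ : TTest T, ENNReal.ofReal (IexprW f D σ T ε u (wDx T u) φ)
  else ⊤

/-! ### Hamilton–Jacobi equations -/

/-- The space `𝓑` (representatives of equivalence classes modulo additive constants). -/
structure HJ (T : ℝ) where
  b : ℝ × ℝ → ℝ
  meas : Measurable b
  sq : ∀ t ∈ Icc (0:ℝ) T, ∀ R > 0, IntegrableOn (fun x => b (t, x) ^ 2) (Icc (-R) R)
  contL2 : ∀ t₀ ∈ Icc (0:ℝ) T, ∀ R > 0, ∀ δ > 0, ∃ ζ > 0, ∀ t ∈ Icc (0:ℝ) T,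
    |t - t₀| < ζ → (∫ x in Icc (-R) R, (b (t, x) - b (t₀, x)) ^ 2) < δ
  ux : cU T
  hux : ∀ φ : TTest T, pair T b (pxF φ.toFun) = - pair T ux.toFun φ.toFun

/-- The part of the distance on `𝓑` involving the infimum over additive constants. -/
def dConst (T : ℝ) (b1 b2 : HJ T) : ℝ :=
  sInf { r : ℝ | ∃ c : ℝ, r = sSup { s : ℝ | ∃ t ∈ Icc (0:ℝ) T,
    s = ∑' n : ℕ, (2 : ℝ)⁻¹ ^ (n + 1) *
      Real.sqrt (∫ x in Icc (-((n : ℝ) + 1)) ((n : ℝ) + 1),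
        (b1.b (t, x) - b2.b (t, x) + c) ^ 2) } }

/-- The metric `d_𝓑`. -/
def dB (T : ℝ) (b1 b2 : HJ T) : ℝ := dcU T b1.ux b2.ux + dConst T b1 b2

/-- The metric `d_𝒴`. -/
def dY (T : ℝ) (b1 b2 : HJ T) : ℝ := dX T b1.ux b2.ux + dConst T b1 b2

/-- The expression inside the supremum defining `J_ε`. -/
def JexprW (f D σ : ℝ → ℝ) (T ε : ℝ) (bb uxf w2 : ℝ × ℝ → ℝ) (φ : TTest T) : ℝ :=
  - pair T bb (ptF φ.toFun) + pair T (fun p => f (uxf p)) φ.toFun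
    - ε / 2 * pair T (fun p => D (uxf p) * w2 p) φ.toFun
    - 1 / 2 * pair T (fun p => σ (uxf p) * φ.toFun p) φ.toFun

/-- The cost functional `J_ε` on `𝓑`. -/
def Jeps (f D σ : ℝ → ℝ) (T ε : ℝ) (b : HJ T) : ℝ≥0∞ :=
  if hasDx T b.ux.toFun then
    ⨆ φ : TTest T, ENNReal.ofReal (JexprW f D σ T ε b.b b.ux.toFun (wDx T b.ux.toFun) φ)
  else ⊤

/-- The rescaled cost functional `K_ε := ε⁻¹ J_ε`. -/
def Keps (f D σ : ℝ → ℝ) (T ε : ℝ) (b : HJ T) : ℝ≥0∞ :=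
  ENNReal.ofReal ε⁻¹ * Jeps f D σ T ε b

/-- Weak solutions to `b_t + f(b_x) = 0`. -/
def HJWeakSol (f : ℝ → ℝ) (T : ℝ) (b : HJ T) : Prop :=
  ∀ φ : TTest T, - pair T b.b (ptF φ.toFun) + pair T (fun p => f (b.ux.toFun p)) φ.toFun = 0

/-- The compatibility condition `b_x = μ(ι)` defining `𝓐`. -/
def APred (T : ℝ) (bm : HJ T × YM T) : Prop :=
  ∀ᵐ p ∂(volume.restrict (Icc (0:ℝ) T ×ˢ (univ : Set ℝ))),
    bm.1.ux.toFun p = bm.2.mom (fun l => l) p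

/-- The metric `d_𝓐`. -/
def dA (T : ℝ) (dw : YM T → YM T → ℝ)
    (x y : { bm : HJ T × YM T // APred T bm }) : ℝ :=
  dB T x.1.1 y.1.1 + dM T dw x.1.2 y.1.2

/-- The lift `𝓙_ε` of `J_ε` to `𝓐`. -/
def calJeps (f D σ : ℝ → ℝ) (T ε : ℝ) (x : { bm : HJ T × YM T // APred T bm }) : ℝ≥0∞ :=
  if ∀ p, x.1.2.m p = Measure.dirac (x.1.1.ux.toFun p) then Jeps f D σ T ε x.1.1 else ⊤

/-- The limiting functional `𝓙` on `𝓐`. -/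
def calJ (f σ : ℝ → ℝ) (T : ℝ) (x : { bm : HJ T × YM T // APred T bm }) : ℝ≥0∞ :=
  ⨆ φ : TTest T, ENNReal.ofReal
    (- pair T x.1.1.b (ptF φ.toFun) + pair T (x.1.2.mom f) φ.toFun
      - 1 / 2 * pair T (fun p => x.1.2.mom σ p * φ.toFun p) φ.toFun)

/-! ### Jump sets and BV solutions -/

/-- The function `ρ(v, u⁺, u⁻)` of Remark 2.3. -/
def rhoJ (f : ℝ → ℝ) (v a b : ℝ) : ℝ :=
  if v ∈ Icc (min a b) (max a b) then
    f b * (a - v) + f a * (v - b) - f v * (a - b)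
  else 0

/-! ### Riesz representation for a quadratic functional -/

section Hilbert
variable {W H : Type*} [AddCommGroup W] [Module ℝ W] [NormedAddCommGroup H]
  [InnerProductSpace ℝ H]

/-- If `l w - ½‖g w‖²` is bounded above, then `l` is bounded by a multiple of `‖g ·‖`: evaluate on
`w` rescaled to `‖g w‖ = 1`. -/
theorem bound_of_le (g : W →ₗ[ℝ] H) (l : W →ₗ[ℝ] ℝ) (M : ℝ)
    (h : ∀ w, l w - 1 / 2 * ‖g w‖ ^ 2 ≤ M) (w : W) : l w ≤ (M + 1 / 2) * ‖g w‖ := by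
  rcases eq_or_ne (‖g w‖) 0 with h0 | h0
  · rw [h0, mul_zero]
    by_contra! hl
    -- scaling `w` makes the left-hand side of `h` exceed any bound
    have := h (((M + 1) / l w) • w)
    simp only [map_smul, smul_eq_mul, norm_smul, h0] at this
    rw [div_mul_cancel₀ _ hl.ne'] at this
    norm_num at this
  · have hp : 0 < ‖g w‖ := lt_of_le_of_ne (norm_nonneg _) (Ne.symm h0)
    have := h ((‖g w‖)⁻¹ • w)
    simp only [map_smul, smul_eq_mul, norm_smul, norm_inv, norm_norm] at this
    rw [inv_mul_cancel₀ h0] at this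
    have h2 : (‖g w‖)⁻¹ * l w ≤ M + 1 / 2 := by linarith
    rwa [inv_mul_le_iff₀ hp, mul_comm] at h2

/-- Riesz representation on the closure of the range of `g`: the bound makes `l` factor through a
continuous functional on `range g`, whose extension to the closure is represented by a vector. -/
theorem exists_riesz [CompleteSpace H] (g : W →ₗ[ℝ] H) (l : W →ₗ[ℝ] ℝ) (M : ℝ)
    (h : ∀ w, l w - 1 / 2 * ‖g w‖ ^ 2 ≤ M) :
    ∃ P ∈ closure (range g), ∀ w, l w = inner ℝ P (g w) := by
  let K : Submodule ℝ H := (LinearMap.range g).topologicalClosure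
  have hgK : ∀ w, g w ∈ K := fun w => Submodule.le_topologicalClosure _ ⟨w, rfl⟩
  let g' : W →ₗ[ℝ] K := g.codRestrict K hgK
  have hC := bound_of_le g l M h
  have hM : 0 ≤ M := by simpa using h 0
  have hC' : ∀ w, ‖l w‖ ≤ (M + 1 / 2) * ‖g w‖ := by
    intro w
    rw [Real.norm_eq_abs]
    refine abs_le'.2 ⟨hC w, ?_⟩
    simpa using hC (-w)
  have hsurj : LinearMap.range g'.rangeRestrict = ⊤ := LinearMap.range_rangeRestrict g'
  obtain ⟨s, hs⟩ := g'.rangeRestrict.exists_rightInverse_of_surjective hsurj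
  have hs' : ∀ r : LinearMap.range g', g (s r) = ((r : K) : H) := by
    intro r
    have := LinearMap.congr_fun hs r
    simpa [g'] using congrArg (fun z : LinearMap.range g' => ((z : K) : H)) this
  let l' : StrongDual ℝ (LinearMap.range g') :=
    (l ∘ₗ s).mkContinuous (M + 1 / 2) (by
      intro r
      have := hC' (s r)
      rw [hs'] at this
      simpa using this)
  obtain ⟨L, hL, -⟩ := exists_extension_norm_eq (LinearMap.range g') l'
  have : CompleteSpace K := (Submodule.isClosed_topologicalClosure _).completeSpace_coe
  refine ⟨((InnerProductSpace.toDual ℝ K).symm L : K), ?_, ?_⟩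
  · exact ((InnerProductSpace.toDual ℝ K).symm L).2
  · intro w
    have h1 : inner ℝ ((InnerProductSpace.toDual ℝ K).symm L) (g' w) = L (g' w) :=
      InnerProductSpace.toDual_symm_apply
    have h2 : L (g' w) = l' ⟨g' w, ⟨w, rfl⟩⟩ := hL ⟨g' w, ⟨w, rfl⟩⟩
    have h3 : l (s ⟨g' w, ⟨w, rfl⟩⟩ - w) = 0 := by
      have := hC' (s ⟨g' w, ⟨w, rfl⟩⟩ - w)
      rw [map_sub g, hs'] at this
      have e : (((⟨g' w, ⟨w, rfl⟩⟩ : LinearMap.range g') : K) : H) = g w := rfl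
      rw [e, sub_self, norm_zero, mul_zero] at this
      exact norm_le_zero_iff.1 this
    rw [map_sub, sub_eq_zero] at h3
    change _ = inner ℝ ((InnerProductSpace.toDual ℝ K).symm L) (g' w)
    rw [h1, h2, ← h3]
    rfl

/-- Completing the square. -/
theorem half_sq_identity (P v : H) :
    inner ℝ P v - 1 / 2 * ‖v‖ ^ 2 = 1 / 2 * ‖P‖ ^ 2 - 1 / 2 * ‖P - v‖ ^ 2 := by
  rw [norm_sub_sq_real]; ring

theorem iSup_eq_of_riesz (g : W →ₗ[ℝ] H) (l : W → ℝ) {P : H}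
    (hP : P ∈ closure (range g)) (hl : ∀ w, l w = inner ℝ P (g w)) :
    ⨆ w, ENNReal.ofReal (l w - 1 / 2 * ‖g w‖ ^ 2) = ENNReal.ofReal (1 / 2 * ‖P‖ ^ 2) := by
  simp only [hl, half_sq_identity]
  apply le_antisymm
  · exact iSup_le fun w => ENNReal.ofReal_le_ofReal (by nlinarith [sq_nonneg ‖P - g w‖])
  · obtain ⟨x, hx, hlim⟩ := mem_closure_iff_seq_limit.1 hP
    choose w hw using hx
    have ht : Tendsto (fun n => ENNReal.ofReal (1 / 2 * ‖P‖ ^ 2 - 1 / 2 * ‖P - g (w n)‖ ^ 2))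
        atTop (𝓝 (ENNReal.ofReal (1 / 2 * ‖P‖ ^ 2 - 1 / 2 * ‖P - P‖ ^ 2))) := by
      refine (ENNReal.continuous_ofReal.tendsto _).comp ?_
      simp only [hw]
      exact (((tendsto_const_nhds.sub hlim).norm.pow 2).const_mul _).const_sub _
    simp only [sub_self, norm_zero] at ht
    norm_num at ht ⊢
    exact le_of_tendsto' ht fun n => le_iSup
      (fun w => ENNReal.ofReal (1 / 2 * ‖P‖ ^ 2 - 1 / 2 * ‖P - g w‖ ^ 2)) (w n)

theorem riesz_unique (g : W →ₗ[ℝ] H) {P P' : H}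
    (hP : P ∈ closure (range g)) (hP' : P' ∈ closure (range g))
    (h : ∀ w, inner ℝ P (g w) = inner ℝ P' (g w)) : P = P' := by
  have hd : P - P' ∈ (LinearMap.range g).topologicalClosure :=
    Submodule.sub_mem _ hP hP'
  have hz : ∀ v ∈ closure (range g), inner ℝ (P - P') v = 0 := by
    intro v hv
    refine closure_minimal (t := {v | inner ℝ (P - P') v = 0}) ?_ ?_ hv
    · rintro _ ⟨w, rfl⟩
      simp [inner_sub_left, h w]
    · exact isClosed_eq (by fun_prop) continuous_const
  exact sub_eq_zero.1 (inner_self_eq_zero.1 (hz _ hd))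
end Hilbert

/-! ### The weighted space `L²(a dt dx)` -/

/-- The weighted measure `a(t,x) dt dx` on the strip `[0,T] × ℝ`. -/
def wt (T : ℝ) (a : ℝ × ℝ → ℝ) : Measure (ℝ × ℝ) :=
  (volume.restrict (Icc (0:ℝ) T ×ˢ (univ : Set ℝ))).withDensity fun p => ENNReal.ofReal (a p)

theorem integral_wt {T : ℝ} {a : ℝ × ℝ → ℝ} (ha : Measurable a) (h0 : ∀ p, 0 ≤ a p)
    (F : ℝ × ℝ → ℝ) :
    ∫ p, F p ∂(wt T a) = ∫ p in Icc (0:ℝ) T ×ˢ (univ : Set ℝ), a p * F p := by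
  rw [wt, integral_withDensity_eq_integral_toReal_smul ha.ennreal_ofReal (by simp)]
  simp [ENNReal.toReal_ofReal (h0 _)]

theorem integrable_wt {T : ℝ} {a : ℝ × ℝ → ℝ} (ha : Measurable a) (h0 : ∀ p, 0 ≤ a p)
    (F : ℝ × ℝ → ℝ) :
    Integrable F (wt T a) ↔
      IntegrableOn (fun p => a p * F p) (Icc (0:ℝ) T ×ˢ (univ : Set ℝ)) := by
  rw [wt, integrable_withDensity_iff_integrable_smul' ha.ennreal_ofReal (by simp)]
  simp [ENNReal.toReal_ofReal (h0 _), IntegrableOn]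

theorem inner_toLp_wt {T : ℝ} {a : ℝ × ℝ → ℝ} (ha : Measurable a) (h0 : ∀ p, 0 ≤ a p)
    {F G : ℝ × ℝ → ℝ} (hF : MemLp F 2 (wt T a)) (hG : MemLp G 2 (wt T a)) :
    inner ℝ (hF.toLp F) (hG.toLp G) = pair T (fun p => a p * F p) G := by
  rw [L2.inner_def]
  have : ∫ p, inner ℝ (hF.toLp F p) (hG.toLp G p) ∂(wt T a) = ∫ p, F p * G p ∂(wt T a) := by
    refine integral_congr_ae ?_
    filter_upwards [hF.coeFn_toLp, hG.coeFn_toLp] with p h1 h2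
    rw [h1, h2]; simp [mul_comm]
  rw [this, integral_wt ha h0, pair]
  simp only [mul_assoc]

theorem norm_toLp_wt_sq {T : ℝ} {a : ℝ × ℝ → ℝ} (ha : Measurable a) (h0 : ∀ p, 0 ≤ a p)
    {F : ℝ × ℝ → ℝ} (hF : MemLp F 2 (wt T a)) :
    ‖hF.toLp F‖ ^ 2 = ∫ p in Icc (0:ℝ) T ×ˢ (univ : Set ℝ), a p * F p ^ 2 := by
  rw [← real_inner_self_eq_norm_sq, inner_toLp_wt ha h0, pair]
  congr 1; ext p; ring

/-! ### Test functions -/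

/-- The vector space underlying `TTest T`. -/
def testSub (T : ℝ) : Submodule ℝ (ℝ × ℝ → ℝ) where
  carrier := {φ | ContDiff ℝ (⊤ : ℕ∞) φ ∧ HasCompactSupport φ ∧
    Function.support φ ⊆ Ioo (0 : ℝ) T ×ˢ (univ : Set ℝ)}
  add_mem' := fun {φ ψ} h h' => ⟨h.1.add h'.1, h.2.1.add h'.2.1,
    (Function.support_add φ ψ).trans (union_subset h.2.2 h'.2.2)⟩
  zero_mem' := ⟨contDiff_const, HasCompactSupport.zero, by simp⟩
  smul_mem' := fun c φ h => ⟨h.1.const_smul c, h.2.1.smul_left (f := fun _ => c),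
    (Function.support_const_smul_subset c φ).trans h.2.2⟩

/-- `TTest T` and `testSub T` are the same functions. -/
def testEquiv (T : ℝ) : testSub T ≃ TTest T where
  toFun φ := ⟨φ.1, φ.2.1, φ.2.2.1, φ.2.2.2⟩
  invFun φ := ⟨φ.toFun, φ.smooth, φ.cpt, φ.supp⟩
  left_inv _ := rfl
  right_inv _ := rfl

theorem continuous_dir {φ : ℝ × ℝ → ℝ} (h : ContDiff ℝ (⊤ : ℕ∞) φ) (v : ℝ × ℝ) :
    Continuous fun p => fderiv ℝ φ p v :=
  (h.continuous_fderiv (by simp)).clm_apply continuous_const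

theorem compact_dir {φ : ℝ × ℝ → ℝ} (h : HasCompactSupport φ) (v : ℝ × ℝ) :
    HasCompactSupport fun p => fderiv ℝ φ p v := by
  refine (h.fderiv ℝ).mono ?_
  intro p hp h'
  exact hp (by simp [h'])

theorem dir_add {φ ψ : ℝ × ℝ → ℝ} (h : ContDiff ℝ (⊤ : ℕ∞) φ) (h' : ContDiff ℝ (⊤ : ℕ∞) ψ)
    (v : ℝ × ℝ) :
    (fun p => fderiv ℝ (φ + ψ) p v) = (fun p => fderiv ℝ φ p v) + fun p => fderiv ℝ ψ p v := by
  ext p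
  rw [fderiv_add (h.differentiable (by simp) p) (h'.differentiable (by simp) p)]
  rfl

theorem dir_smul {φ : ℝ × ℝ → ℝ} (h : ContDiff ℝ (⊤ : ℕ∞) φ) (c : ℝ) (v : ℝ × ℝ) :
    (fun p => fderiv ℝ (c • φ) p v) = c • fun p => fderiv ℝ φ p v := by
  ext p
  rw [fderiv_const_smul (h.differentiable (by simp) p)]
  rfl

/-- A bounded measurable function times a continuous compactly supported one is integrable. -/
theorem integrable_bdd_mul {m : Measure (ℝ × ℝ)} [IsFiniteMeasureOnCompacts m]
    {u φ : ℝ × ℝ → ℝ} {C : ℝ} (hu : Measurable u) (hC : ∀ p, |u p| ≤ C)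
    (hφ : Continuous φ) (hc : HasCompactSupport φ) : Integrable (fun p => u p * φ p) m :=
  (hφ.integrable_of_hasCompactSupport hc).bdd_mul hu.aestronglyMeasurable
    (Eventually.of_forall fun p => hC p)

theorem memLp_dir {T : ℝ} {a : ℝ × ℝ → ℝ} (ha : Measurable a) (h0 : ∀ p, 0 ≤ a p) {C : ℝ}
    (hC : ∀ p, |a p| ≤ C) {φ : ℝ × ℝ → ℝ} (h : ContDiff ℝ (⊤ : ℕ∞) φ)
    (hc : HasCompactSupport φ) : MemLp (pxF φ) 2 (wt T a) := by
  have hcont : Continuous (pxF φ) := continuous_dir h (0, 1)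
  have hcs : HasCompactSupport (pxF φ) := compact_dir hc (0, 1)
  rw [memLp_two_iff_integrable_sq hcont.aestronglyMeasurable, integrable_wt ha h0]
  refine integrable_bdd_mul ha hC (hcont.pow 2) ?_
  exact hcs.comp_left (g := fun x => x ^ 2) (by simp)

/-- The map `φ ↦ φ_x` into `L²(a dt dx)`; the closure of its range is `𝓓¹_a`. -/
def gradL {T : ℝ} {a : ℝ × ℝ → ℝ}
    (h : ∀ φ : testSub T, MemLp (pxF φ.1) 2 (wt T a)) : testSub T →ₗ[ℝ] Lp ℝ 2 (wt T a) where
  toFun φ := (h φ).toLp _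
  map_add' φ ψ := by
    rw [← MemLp.toLp_add]
    exact MemLp.toLp_congr _ _ (Eventually.of_forall fun p =>
      congrFun (dir_add φ.2.1 ψ.2.1 (0, 1)) p)
  map_smul' c φ := by
    rw [← MemLp.toLp_const_smul]
    exact MemLp.toLp_congr _ _ (Eventually.of_forall fun p =>
      congrFun (dir_smul φ.2.1 c (0, 1)) p)

theorem pair_add_right {T : ℝ} {u φ ψ : ℝ × ℝ → ℝ} {C : ℝ} (hu : Measurable u)
    (hC : ∀ p, |u p| ≤ C) (hφ : Continuous φ) (hc : HasCompactSupport φ) (hψ : Continuous ψ)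
    (hc' : HasCompactSupport ψ) : pair T u (φ + ψ) = pair T u φ + pair T u ψ := by
  rw [pair, pair, pair, ← integral_add (integrable_bdd_mul hu hC hφ hc)
    (integrable_bdd_mul hu hC hψ hc')]
  simp only [Pi.add_apply, mul_add]

theorem pair_smul_right {T : ℝ} (u φ : ℝ × ℝ → ℝ) (c : ℝ) :
    pair T u (c • φ) = c * pair T u φ := by
  rw [pair, pair, ← integral_const_mul]
  congr 1; ext p; simp; ring

/-- The distribution `u_t + F_x` as a linear functional on test functions. -/
def ellL {T : ℝ} {u F : ℝ × ℝ → ℝ} {C : ℝ} (hu : Measurable u) (huC : ∀ p, |u p| ≤ C)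
    (hF : Measurable F) (hFC : ∀ p, |F p| ≤ C) : testSub T →ₗ[ℝ] ℝ where
  toFun φ := - pair T u (ptF φ.1) - pair T F (pxF φ.1)
  map_add' φ ψ := by
    have h1 : ptF (φ.1 + ψ.1) = ptF φ.1 + ptF ψ.1 := dir_add φ.2.1 ψ.2.1 (1, 0)
    have h2 : pxF (φ.1 + ψ.1) = pxF φ.1 + pxF ψ.1 := dir_add φ.2.1 ψ.2.1 (0, 1)
    rw [Submodule.coe_add, h1, h2,
      pair_add_right (φ := ptF φ.1) (ψ := ptF ψ.1) hu huC (continuous_dir φ.2.1 _)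
        (compact_dir φ.2.2.1 _) (continuous_dir ψ.2.1 _) (compact_dir ψ.2.2.1 _),
      pair_add_right (φ := pxF φ.1) (ψ := pxF ψ.1) hF hFC (continuous_dir φ.2.1 _)
        (compact_dir φ.2.2.1 _) (continuous_dir ψ.2.1 _) (compact_dir ψ.2.2.1 _)]
    ring
  map_smul' c φ := by
    have h1 : ptF (c • φ.1) = c • ptF φ.1 := dir_smul φ.2.1 c (1, 0)
    have h2 : pxF (c • φ.1) = c • pxF φ.1 := dir_smul φ.2.1 c (0, 1)
    rw [Submodule.coe_smul, h1, h2, pair_smul_right, pair_smul_right]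
    simp; ring

/-! ### Cutoff in time -/

/-- A smooth cutoff with values in `[0,1]`, vanishing outside `(0,T)` and tending to `1` on `(0,T)`
as `n → ∞`. -/
def cut (T : ℝ) (n : ℕ) (t : ℝ) : ℝ :=
  Real.smoothTransition (n * t) * Real.smoothTransition (n * (T - t))

theorem cut_contDiff (T : ℝ) (n : ℕ) : ContDiff ℝ (⊤ : ℕ∞) (cut T n) := by
  unfold cut
  exact (Real.smoothTransition.contDiff.comp (by fun_prop)).mul
    (Real.smoothTransition.contDiff.comp (by fun_prop))

theorem cut_nonneg (T : ℝ) (n : ℕ) (t : ℝ) : 0 ≤ cut T n t :=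
  mul_nonneg (Real.smoothTransition.nonneg _) (Real.smoothTransition.nonneg _)

theorem cut_le_one (T : ℝ) (n : ℕ) (t : ℝ) : cut T n t ≤ 1 :=
  mul_le_one₀ (Real.smoothTransition.le_one _) (Real.smoothTransition.nonneg _)
    (Real.smoothTransition.le_one _)

theorem cut_eq_zero {T : ℝ} {n : ℕ} {t : ℝ} (h : t ∉ Ioo (0:ℝ) T) : cut T n t = 0 := by
  by_cases h1 : 0 < t
  · have : T ≤ t := by by_contra! h2; exact h ⟨h1, h2⟩
    rw [cut, Real.smoothTransition.zero_of_nonpos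
      (mul_nonpos_of_nonneg_of_nonpos n.cast_nonneg (by linarith : T - t ≤ 0)), mul_zero]
  · rw [cut, Real.smoothTransition.zero_of_nonpos
      (mul_nonpos_of_nonneg_of_nonpos n.cast_nonneg (not_lt.1 h1)), zero_mul]

theorem cut_eventually {T t : ℝ} (h : t ∈ Ioo (0:ℝ) T) : ∀ᶠ n : ℕ in atTop, cut T n t = 1 := by
  have e1 : ∀ s : ℝ, 0 < s → ∀ᶠ n : ℕ in atTop, 1 ≤ n * s := fun s hs =>
    (tendsto_natCast_atTop_atTop.atTop_mul_const hs).eventually_ge_atTop 1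
  filter_upwards [e1 t h.1, e1 (T - t) (sub_pos.2 h.2)] with n h1 h2
  rw [cut, Real.smoothTransition.one_of_one_le h1, Real.smoothTransition.one_of_one_le h2, one_mul]

/-- The test function `χₙ(t) φ(t,x)`, which vanishes outside `(0,T) × ℝ`. -/
def cutTest (T : ℝ) (n : ℕ) (φ : TTestC) : testSub T :=
  ⟨fun p => cut T n p.1 * φ.toFun p,
    ((cut_contDiff T n).comp contDiff_fst).mul φ.smooth,
    φ.cpt.mul_left, by
      intro p hp
      refine ⟨?_, mem_univ _⟩
      by_contra h
      exact hp (by simp [cut_eq_zero h])⟩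

theorem pxF_cutTest (T : ℝ) (n : ℕ) (φ : TTestC) (p : ℝ × ℝ) :
    pxF (cutTest T n φ).1 p = cut T n p.1 * pxF φ.toFun p := by
  have h1 : HasFDerivAt (fun q : ℝ × ℝ => cut T n q.1)
      ((fderiv ℝ (cut T n) p.1).comp (ContinuousLinearMap.fst ℝ ℝ ℝ)) p :=
    (((cut_contDiff T n).differentiable (by simp) p.1).hasFDerivAt).comp p hasFDerivAt_fst
  have h2 := (φ.smooth.differentiable (by simp) p).hasFDerivAt
  have h3 := (h1.mul h2).fderiv
  change fderiv ℝ ((fun q : ℝ × ℝ => cut T n q.1) * φ.toFun) p (0, 1) = _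
  rw [h3]
  simp [pxF]

theorem ae_strip_Ioo (T : ℝ) :
    ∀ᵐ p ∂(volume.restrict (Icc (0:ℝ) T ×ˢ (univ : Set ℝ))), p.1 ∈ Ioo (0:ℝ) T := by
  have h1 : (Ioo (0:ℝ) T ×ˢ (univ : Set ℝ) : Set (ℝ × ℝ)) =ᵐ[volume] Icc (0:ℝ) T ×ˢ univ := by
    rw [Measure.volume_eq_prod]
    exact Measure.set_prod_ae_eq Ioo_ae_eq_Icc (ae_eq_refl _)
  rw [← Measure.restrict_congr_set h1]
  filter_upwards [ae_restrict_mem (measurableSet_Ioo.prod MeasurableSet.univ)] with p hp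
  exact hp.1

/-- Since only `x`-derivatives enter the seminorm of `𝓓¹_a`, test functions vanishing at
`t = 0, T` are dense among all test functions. -/
theorem toLp_mem_closure {T : ℝ} {a : ℝ × ℝ → ℝ} (ha : Measurable a) (h0 : ∀ p, 0 ≤ a p)
    (h : ∀ φ : testSub T, MemLp (pxF φ.1) 2 (wt T a)) (φ : TTestC)
    (hφ : MemLp (pxF φ.toFun) 2 (wt T a)) :
    hφ.toLp _ ∈ closure (range (gradL h)) := by
  refine mem_closure_of_tendsto (f := fun n => gradL h (cutTest T n φ)) (b := atTop) ?_
    (Eventually.of_forall fun n => ⟨_, rfl⟩)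
  rw [tendsto_iff_norm_sub_tendsto_zero]
  have hsq : ∀ n, ‖gradL h (cutTest T n φ) - hφ.toLp _‖ ^ 2 =
      ∫ p in Icc (0:ℝ) T ×ˢ (univ : Set ℝ), a p * ((cut T n p.1 - 1) * pxF φ.toFun p) ^ 2 := by
    intro n
    change ‖(h (cutTest T n φ)).toLp _ - hφ.toLp _‖ ^ 2 = _
    rw [← MemLp.toLp_sub, norm_toLp_wt_sq ha h0]
    congr 1; ext p
    rw [Pi.sub_apply, pxF_cutTest]; ring
  have hlim : Tendsto (fun n : ℕ => ∫ p in Icc (0:ℝ) T ×ˢ (univ : Set ℝ),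
      a p * ((cut T n p.1 - 1) * pxF φ.toFun p) ^ 2) atTop
      (𝓝 (∫ p in Icc (0:ℝ) T ×ˢ (univ : Set ℝ), (0:ℝ))) := by
    have hcont : Continuous (pxF φ.toFun) := continuous_dir φ.smooth (0, 1)
    refine tendsto_integral_of_dominated_convergence (fun p => a p * pxF φ.toFun p ^ 2) ?_ ?_ ?_ ?_
    · intro n
      have : Measurable fun p : ℝ × ℝ => cut T n p.1 :=
        (cut_contDiff T n).continuous.measurable.comp measurable_fst
      exact (ha.mul (((this.sub_const 1).mul hcont.measurable).pow_const 2)).aestronglyMeasurable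
    · exact (integrable_wt ha h0 _).1 hφ.integrable_sq
    · intro n
      refine Eventually.of_forall fun p => ?_
      rw [Real.norm_of_nonneg (mul_nonneg (h0 p) (sq_nonneg _))]
      refine mul_le_mul_of_nonneg_left ?_ (h0 p)
      rw [mul_pow]
      refine mul_le_of_le_one_left (sq_nonneg _) ?_
      have h1 := cut_nonneg T n p.1
      have h2 := cut_le_one T n p.1
      nlinarith
    · filter_upwards [ae_strip_Ioo T] with p hp
      refine tendsto_const_nhds.congr' ?_
      filter_upwards [cut_eventually hp] with n hn
      simp [hn]
  simp only [← hsq, integral_zero] at hlim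
  have := hlim.sqrt
  simpa using this

theorem InD1.memLp {T : ℝ} {a P : ℝ × ℝ → ℝ} (ha : Measurable a) (h0 : ∀ p, 0 ≤ a p)
    (hP : InD1 T a P) : MemLp P 2 (wt T a) := by
  rw [memLp_two_iff_integrable_sq hP.1.aestronglyMeasurable, integrable_wt ha h0]
  exact hP.2.1

theorem InD1.mem_closure {T : ℝ} {a P : ℝ × ℝ → ℝ} (ha : Measurable a) (h0 : ∀ p, 0 ≤ a p)
    {C : ℝ} (hC : ∀ p, |a p| ≤ C) (h : ∀ φ : testSub T, MemLp (pxF φ.1) 2 (wt T a))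
    (hP : InD1 T a P) : (hP.memLp ha h0).toLp P ∈ closure (range (gradL h)) := by
  rw [← closure_closure, Metric.mem_closure_iff]
  intro ε hε
  obtain ⟨φ, hφ⟩ := hP.2.2 (ε ^ 2) (by positivity)
  have hm := memLp_dir (T := T) ha h0 hC φ.smooth φ.cpt
  refine ⟨_, toLp_mem_closure ha h0 h φ hm, ?_⟩
  rw [dist_eq_norm, ← MemLp.toLp_sub]
  refine lt_of_pow_lt_pow_left₀ 2 hε.le ?_
  rw [norm_toLp_wt_sq ha h0]
  exact hφ

/-- Every element of the closure of the gradients has a representative satisfying `InD1`. -/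
theorem exists_InD1 {T : ℝ} {a : ℝ × ℝ → ℝ} (ha : Measurable a) (h0 : ∀ p, 0 ≤ a p)
    (h : ∀ φ : testSub T, MemLp (pxF φ.1) 2 (wt T a)) {Q : Lp ℝ 2 (wt T a)}
    (hQ : Q ∈ closure (range (gradL h))) :
    ∃ (P : ℝ × ℝ → ℝ) (hP : MemLp P 2 (wt T a)), InD1 T a P ∧ hP.toLp P = Q := by
  have hQm := Lp.memLp Q
  have hQs := Lp.stronglyMeasurable Q
  refine ⟨Q, hQm, ⟨hQs.measurable, (integrable_wt ha h0 _).1 hQm.integrable_sq, ?_⟩,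
    Lp.toLp_coeFn _ _⟩
  intro δ hδ
  obtain ⟨_, ⟨φ, rfl⟩, hφ⟩ := Metric.mem_closure_iff.1 hQ (√δ) (Real.sqrt_pos.2 hδ)
  refine ⟨⟨φ.1, φ.2.1, φ.2.2.1⟩, ?_⟩
  have e : Q - gradL h φ = (hQm.sub (h φ)).toLp _ := by
    rw [MemLp.toLp_sub hQm (h φ), Lp.toLp_coeFn]; rfl
  rw [dist_eq_norm, e, Real.lt_sqrt (norm_nonneg _), norm_toLp_wt_sq ha h0] at hφ
  exact hφ

/-! ### Weakly `x`-constant functions in `L²` vanish -/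

/-- The primitive in `x` of `ψ(t,x) - ψ(t,x-n)`. -/
def slide (ψ : ℝ × ℝ → ℝ) (n : ℝ) (p : ℝ × ℝ) : ℝ := ∫ s in 0..n, ψ (p.1, p.2 - s)

open scoped Convolution in
theorem slide_contDiff {ψ : ℝ × ℝ → ℝ} (h : ContDiff ℝ (⊤ : ℕ∞) ψ) (hc : HasCompactSupport ψ)
    {n : ℝ} (hn : 0 ≤ n) : ContDiff ℝ (⊤ : ℕ∞) (slide ψ n) := by
  -- `slide ψ n (t, ·)` is the convolution of `𝟙_(0,n]` with `ψ (t, ·)`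
  have key := contDiffOn_convolution_right_with_param (𝕜 := ℝ) (μ := (volume : Measure ℝ))
    (f := (Ioc (0:ℝ) n).indicator fun _ => (1:ℝ)) (n := ⊤) (ContinuousLinearMap.mul ℝ ℝ)
    (g := fun t x => ψ (t, x)) (s := univ) (k := Prod.snd '' tsupport ψ) isOpen_univ
    (hc.isCompact.image continuous_snd)
    (by
      intro t x _ hx
      by_contra hne
      exact hx ⟨(t, x), subset_tsupport _ hne, rfl⟩)
    (by
      refine Integrable.locallyIntegrable ?_
      exact (integrable_indicator_iff measurableSet_Ioc).2
        (integrableOn_const (by simp)))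
    (by
      refine ContDiff.contDiffOn ?_
      exact h)
  rw [univ_prod_univ, contDiffOn_univ] at key
  convert key using 1
  ext p
  rw [slide, intervalIntegral.integral_of_le hn, ← integral_indicator measurableSet_Ioc, convolution]
  congr 1; ext s
  by_cases hs : s ∈ Ioc (0:ℝ) n <;> simp [hs]

theorem slide_compact {ψ : ℝ × ℝ → ℝ} (hc : HasCompactSupport ψ)
    {n : ℝ} (hn : 0 ≤ n) : HasCompactSupport (slide ψ n) := by
  have hK : IsCompact ((fun q : (ℝ × ℝ) × ℝ => (q.1.1, q.1.2 + q.2)) ''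
      (tsupport ψ ×ˢ Icc (0:ℝ) n)) :=
    (hc.isCompact.prod isCompact_Icc).image (by fun_prop)
  refine HasCompactSupport.of_support_subset_isCompact hK ?_
  intro p hp
  by_contra hne
  refine hp ?_
  rw [slide, intervalIntegral.integral_congr (g := fun _ => (0:ℝ)), intervalIntegral.integral_zero]
  intro s hs
  rw [uIcc_of_le hn] at hs
  by_contra h
  exact hne ⟨((p.1, p.2 - s), s), ⟨subset_tsupport _ h, hs⟩, by simp⟩

theorem slide_support {T : ℝ} {ψ : ℝ × ℝ → ℝ}
    (hs : Function.support ψ ⊆ Ioo (0 : ℝ) T ×ˢ (univ : Set ℝ)) (n : ℝ) :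
    Function.support (slide ψ n) ⊆ Ioo (0 : ℝ) T ×ˢ (univ : Set ℝ) := by
  intro p hp
  refine ⟨?_, mem_univ _⟩
  by_contra hne
  refine hp ?_
  have : ∀ s, ψ (p.1, p.2 - s) = 0 := by
    intro s
    by_contra h
    exact hne (hs h).1
  simp [slide, this]

theorem pxF_slide {ψ : ℝ × ℝ → ℝ} (h : ContDiff ℝ (⊤ : ℕ∞) ψ) (hc : HasCompactSupport ψ)
    {n : ℝ} (hn : 0 ≤ n) (p : ℝ × ℝ) : pxF (slide ψ n) p = ψ p - ψ (p.1, p.2 - n) := by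
  have hline : HasDerivAt (fun x : ℝ => (p.1, x)) ((0:ℝ), (1:ℝ)) p.2 :=
    (hasDerivAt_const _ _).prodMk (hasDerivAt_id _)
  have h1 : HasDerivAt (fun x : ℝ => slide ψ n (p.1, x)) (pxF (slide ψ n) p) p.2 :=
    HasFDerivAt.comp_hasDerivAt (l := slide ψ n) (f := fun x : ℝ => (p.1, x)) p.2
      ((slide_contDiff h hc hn).differentiable (by simp) p).hasFDerivAt hline
  have hcont : Continuous fun y : ℝ => ψ (p.1, y) := h.continuous.comp (by fun_prop)
  have h2 : HasDerivAt (fun x : ℝ => slide ψ n (p.1, x)) (ψ p - ψ (p.1, p.2 - n)) p.2 := by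
    have e : (fun x : ℝ => slide ψ n (p.1, x)) =
        fun x => (∫ y in 0..x, ψ (p.1, y)) - ∫ y in 0..(x - n), ψ (p.1, y) := by
      ext x
      rw [intervalIntegral.integral_interval_sub_left (hcont.intervalIntegrable _ _)
        (hcont.intervalIntegrable _ _), slide,
        intervalIntegral.integral_comp_sub_left (fun y => ψ (p.1, y)) x, sub_zero]
    rw [e]
    have d : ∀ x, HasDerivAt (fun x => ∫ y in 0..x, ψ (p.1, y)) (ψ (p.1, x)) x := fun x =>
      intervalIntegral.integral_hasDerivAt_right (hcont.intervalIntegrable _ _)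
        (hcont.stronglyMeasurableAtFilter _ _) hcont.continuousAt
    exact (d p.2).sub ((d (p.2 - n)).comp_sub_const p.2 n)
  exact h1.unique h2

/-- The mass of `h²` on the support of the translates of `ψ` tends to zero. -/
theorem tendsto_mass_translate {T : ℝ} {h ψ : ℝ × ℝ → ℝ} (hm : Measurable h)
    (hsq : IntegrableOn (fun p => h p ^ 2) (Icc (0:ℝ) T ×ˢ (univ : Set ℝ)))
    (hψ : Continuous ψ) (hc : HasCompactSupport ψ) :
    Tendsto (fun n : ℕ => ∫ p in Icc (0:ℝ) T ×ˢ (univ : Set ℝ),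
      {q : ℝ × ℝ | ψ (q.1, q.2 - n) ≠ 0}.indicator (fun q => h q ^ 2) p) atTop (𝓝 0) := by
  have e : 𝓝 (0:ℝ) = 𝓝 (∫ _ in Icc (0:ℝ) T ×ˢ (univ : Set ℝ), (0:ℝ)) := by simp
  rw [e]
  refine tendsto_integral_of_dominated_convergence (fun p => h p ^ 2) ?_ hsq ?_ ?_
  · intro n
    have hcn : Continuous fun q : ℝ × ℝ => ψ (q.1, q.2 - n) := hψ.comp (by fun_prop)
    exact ((hm.pow_const 2).indicator
      (measurableSet_eq_fun hcn.measurable measurable_const).compl).aestronglyMeasurable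
  · intro n
    refine Eventually.of_forall fun p => ?_
    refine (norm_indicator_le_norm_self _ _).trans ?_
    rw [Real.norm_of_nonneg (sq_nonneg _)]
  · refine Eventually.of_forall fun p => ?_
    obtain ⟨R, hR⟩ := (hc.isCompact.image continuous_snd).isBounded.subset_closedBall (0:ℝ)
    refine tendsto_const_nhds.congr' ?_
    filter_upwards [tendsto_natCast_atTop_atTop.eventually_gt_atTop (p.2 + R)] with n hn
    rw [indicator_of_notMem]
    intro hne
    have := hR ⟨(p.1, p.2 - n), subset_tsupport _ hne, rfl⟩
    rw [mem_closedBall_zero_iff, Real.norm_eq_abs] at this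
    have := (abs_le.1 this).1
    linarith

theorem young_pointwise {K : ℝ} (hK : 0 < K) (x y : ℝ) :
    |x * y| ≤ K * x ^ 2 + K⁻¹ * y ^ 2 := by
  have h1 : K * x ^ 2 + K⁻¹ * y ^ 2 - |x| * |y|
      = K⁻¹ * ((K * |x| - |y| / 2) ^ 2 + 3 / 4 * |y| ^ 2) := by
    rw [← sq_abs x, ← sq_abs y]
    field_simp
    ring
  have h2 : 0 ≤ K⁻¹ * ((K * |x| - |y| / 2) ^ 2 + 3 / 4 * |y| ^ 2) := by positivity
  rw [abs_mul]
  linarith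

/-- Young's inequality, with `h²` only charged on the support of `ψ`. -/
theorem abs_pair_le_young {T : ℝ} {h ψ : ℝ × ℝ → ℝ} (hm : Measurable h)
    (hsq : IntegrableOn (fun p => h p ^ 2) (Icc (0:ℝ) T ×ˢ (univ : Set ℝ)))
    (hψ : Continuous ψ) (hψsq : Integrable fun p => ψ p ^ 2) {K : ℝ} (hK : 0 < K) :
    |pair T h ψ| ≤ K * (∫ p in Icc (0:ℝ) T ×ˢ (univ : Set ℝ),
        {q | ψ q ≠ 0}.indicator (fun q => h q ^ 2) p)
      + K⁻¹ * ∫ p in Icc (0:ℝ) T ×ˢ (univ : Set ℝ), ψ p ^ 2 := by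
  have hLp : MemLp h 2 (volume.restrict (Icc (0:ℝ) T ×ˢ (univ : Set ℝ))) :=
    (memLp_two_iff_integrable_sq hm.aestronglyMeasurable).2 hsq
  have hi2 : IntegrableOn (fun p => ψ p ^ 2) (Icc (0:ℝ) T ×ˢ (univ : Set ℝ)) :=
    hψsq.integrableOn
  have hLp' : MemLp ψ 2 (volume.restrict (Icc (0:ℝ) T ×ˢ (univ : Set ℝ))) :=
    (memLp_two_iff_integrable_sq hψ.aestronglyMeasurable).2 hi2
  have hi : IntegrableOn ({q | ψ q ≠ 0}.indicator fun q => h q ^ 2)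
      (Icc (0:ℝ) T ×ˢ (univ : Set ℝ)) :=
    hsq.indicator (measurableSet_eq_fun hψ.measurable measurable_const).compl
  rw [← integral_const_mul, ← integral_const_mul,
    ← integral_add (hi.const_mul K) (hi2.const_mul K⁻¹)]
  refine abs_integral_le_integral_abs.trans ?_
  refine integral_mono (hLp.integrable_mul hLp').abs
    ((hi.const_mul K).add (hi2.const_mul K⁻¹)) fun p => ?_
  by_cases hp : ψ p = 0
  · simp [hp]
  · have hp' : p ∈ {q | ψ q ≠ 0} := hp
    simp only [indicator_of_mem hp']
    exact young_pointwise hK _ _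

theorem sq_translate {ψ : ℝ × ℝ → ℝ} (hψsq : Integrable fun p => ψ p ^ 2) (n : ℝ) :
    Integrable (fun p : ℝ × ℝ => ψ (p.1, p.2 - n) ^ 2) ∧
      ∫ p : ℝ × ℝ, ψ (p.1, p.2 - n) ^ 2 = ∫ p, ψ p ^ 2 := by
  have e : (fun p : ℝ × ℝ => ψ (p.1, p.2 - n) ^ 2) = fun p => ψ (p - (0, n)) ^ 2 := by
    ext p; simp [Prod.sub_def]
  rw [e]
  exact ⟨hψsq.comp_sub_right (0, n), integral_sub_right_eq_self (fun p => ψ p ^ 2) (0, n)⟩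

theorem integrable_sq_of_compact {ψ : ℝ × ℝ → ℝ} (hψ : Continuous ψ)
    (hc : HasCompactSupport ψ) : Integrable (fun p => ψ p ^ 2) (volume : Measure (ℝ × ℝ)) := by
  have hc2 : HasCompactSupport (fun p => ψ p ^ 2) :=
    hc.comp_left (g := fun x : ℝ => x ^ 2) (by simp)
  have hψ2 : Continuous fun p => ψ p ^ 2 := hψ.pow 2
  exact hψ2.integrable_of_hasCompactSupport hc2

theorem memLp_strip {T : ℝ} {h : ℝ × ℝ → ℝ} (hm : Measurable h)
    (hsq : IntegrableOn (fun p => h p ^ 2) (Icc (0:ℝ) T ×ˢ (univ : Set ℝ))) :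
    MemLp h 2 (volume.restrict (Icc (0:ℝ) T ×ˢ (univ : Set ℝ))) :=
  (memLp_two_iff_integrable_sq hm.aestronglyMeasurable).2 hsq

theorem pair_sub_right {T : ℝ} {h F G : ℝ × ℝ → ℝ}
    (hh : MemLp h 2 (volume.restrict (Icc (0:ℝ) T ×ˢ (univ : Set ℝ))))
    (hF : MemLp F 2 (volume.restrict (Icc (0:ℝ) T ×ˢ (univ : Set ℝ))))
    (hG : MemLp G 2 (volume.restrict (Icc (0:ℝ) T ×ˢ (univ : Set ℝ)))) :
    pair T h (fun p => F p - G p) = pair T h F - pair T h G := by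
  have h1 : Integrable (fun p => h p * F p)
    (volume.restrict (Icc (0:ℝ) T ×ˢ (univ : Set ℝ))) := hh.integrable_mul hF
  have h2 : Integrable (fun p => h p * G p)
    (volume.restrict (Icc (0:ℝ) T ×ˢ (univ : Set ℝ))) := hh.integrable_mul hG
  simp only [pair, mul_sub]
  exact integral_sub h1 h2

theorem pair_comm (T : ℝ) (g h : ℝ × ℝ → ℝ) : pair T g h = pair T h g := by
  simp only [pair, mul_comm]

/-- An `L²` function on the strip whose weak `x`-derivative vanishes pairs to zero with every test
function: testing against `slide ψ n` shows that its pairing with `ψ` equals the pairing with `ψ` translated by `n`, which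
tends to `0` as `n → ∞`. -/
theorem integral_mul_eq_zero {T : ℝ} {h : ℝ × ℝ → ℝ} (hm : Measurable h)
    (hsq : IntegrableOn (fun p => h p ^ 2) (Icc (0:ℝ) T ×ˢ (univ : Set ℝ)))
    (hw : ∀ φ : TTest T, pair T h (pxF φ.toFun) = 0) (ψ : TTest T) : pair T h ψ.toFun = 0 := by
  have hLp : MemLp h 2 (volume.restrict (Icc (0:ℝ) T ×ˢ (univ : Set ℝ))) :=
    memLp_strip hm hsq
  have hψc : Continuous ψ.toFun := ψ.smooth.continuous
  have hcn : ∀ n : ℕ, Continuous fun p : ℝ × ℝ => ψ.toFun (p.1, p.2 - n) := fun n =>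
    hψc.comp (by fun_prop)
  have hψsq : Integrable fun p => ψ.toFun p ^ 2 :=
    integrable_sq_of_compact hψc ψ.cpt
  have hLp0 : MemLp ψ.toFun 2 (volume.restrict (Icc (0:ℝ) T ×ˢ (univ : Set ℝ))) :=
    memLp_strip hψc.measurable hψsq.integrableOn
  have hψn := sq_translate hψsq
  have heq : ∀ n : ℕ, pair T h ψ.toFun = pair T h fun p => ψ.toFun (p.1, p.2 - n) := by
    intro n
    have hn : (0:ℝ) ≤ n := n.cast_nonneg
    have hLpn : MemLp (fun p : ℝ × ℝ => ψ.toFun (p.1, p.2 - n)) 2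
        (volume.restrict (Icc (0:ℝ) T ×ˢ (univ : Set ℝ))) :=
      memLp_strip (hcn n).measurable (hψn n).1.integrableOn
    have := hw ⟨slide ψ.toFun n, slide_contDiff ψ.smooth ψ.cpt hn, slide_compact ψ.cpt hn,
      slide_support ψ.supp n⟩
    have e : pxF (slide ψ.toFun n) = fun p => ψ.toFun p - ψ.toFun (p.1, p.2 - n) := by
      ext p; exact pxF_slide ψ.smooth ψ.cpt hn p
    simp only [e] at this
    rw [pair_sub_right hLp hLp0 hLpn] at this
    exact sub_eq_zero.1 this
  have hlim := tendsto_mass_translate hm hsq hψc ψ.cpt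
  have hineq : ∀ K : ℝ, 0 < K → |pair T h ψ.toFun| ≤ (∫ p, ψ.toFun p ^ 2) / K := by
    intro K hK
    have hl := (hlim.const_mul K).add_const ((∫ p, ψ.toFun p ^ 2) / K)
    rw [mul_zero, zero_add] at hl
    refine ge_of_tendsto' hl fun n => ?_
    rw [heq n]
    refine (abs_pair_le_young hm hsq (hcn n) (hψn n).1 hK).trans ?_
    rw [div_eq_inv_mul]
    refine add_le_add le_rfl (mul_le_mul_of_nonneg_left ?_ (inv_pos.2 hK).le)
    exact (setIntegral_le_integral (hψn n).1 (Eventually.of_forall fun p => sq_nonneg _)).trans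
      (hψn n).2.le
  have hl : Tendsto (fun K : ℝ => (∫ p, ψ.toFun p ^ 2) / K) atTop (𝓝 0) :=
    tendsto_const_nhds.div_atTop tendsto_id
  have : |pair T h ψ.toFun| ≤ 0 := ge_of_tendsto hl (by
    filter_upwards [eventually_gt_atTop 0] with K hK using hineq K hK)
  exact abs_nonpos_iff.1 this

/-- An `L²` function on the strip whose weak `x`-derivative vanishes is zero. -/
theorem ae_zero_of_weak {T : ℝ} {h : ℝ × ℝ → ℝ} (hm : Measurable h)
    (hsq : IntegrableOn (fun p => h p ^ 2) (Icc (0:ℝ) T ×ˢ (univ : Set ℝ)))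
    (hw : ∀ φ : TTest T, pair T h (pxF φ.toFun) = 0) :
    ∀ᵐ p ∂(volume.restrict (Icc (0:ℝ) T ×ˢ (univ : Set ℝ))), h p = 0 := by
  have hopen : IsOpen (Ioo (0:ℝ) T ×ˢ (univ : Set ℝ)) := isOpen_Ioo.prod isOpen_univ
  have hsub : Ioo (0:ℝ) T ×ˢ (univ : Set ℝ) ⊆ Icc (0:ℝ) T ×ˢ (univ : Set ℝ) :=
    prod_mono Ioo_subset_Icc_self le_rfl
  have hmeas : MeasurableSet (Icc (0:ℝ) T ×ˢ (univ : Set ℝ)) :=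
    measurableSet_Icc.prod MeasurableSet.univ
  have hloc : LocallyIntegrableOn h (Ioo (0:ℝ) T ×ˢ (univ : Set ℝ)) volume := by
    have hLp : MemLp h 2 (volume.restrict (Icc (0:ℝ) T ×ˢ (univ : Set ℝ))) :=
      (memLp_two_iff_integrable_sq hm.aestronglyMeasurable).2 hsq
    have := hLp.locallyIntegrable (by norm_num)
    rw [← locallyIntegrableOn_iff_locallyIntegrable_restrict
      (isClosed_Icc.prod isClosed_univ)] at this
    exact this.mono_set hsub
  have key := hopen.ae_eq_zero_of_integral_contDiff_smul_eq_zero hloc (by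
    intro g hg hgc hgs
    have hgs' : Function.support g ⊆ Ioo (0:ℝ) T ×ˢ (univ : Set ℝ) :=
      (subset_tsupport g).trans hgs
    have := integral_mul_eq_zero hm hsq hw ⟨g, hg, hgc, hgs'⟩
    rw [pair, setIntegral_eq_integral_of_forall_compl_eq_zero] at this
    · simpa [mul_comm] using this
    · intro p hp
      have : g p = 0 := by
        by_contra hne
        exact hp (hsub (hgs' hne))
      simp [this])
  filter_upwards [ae_strip_Ioo T, ae_restrict_of_ae key] with p h1 h2
  exact h2 ⟨h1, mem_univ _⟩

/-! ### Moments of Young measures -/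

theorem YM.ae_mem {T : ℝ} (μ : YM T) (p : ℝ × ℝ) : ∀ᵐ l ∂(μ.m p), l ∈ Icc (0:ℝ) 1 :=
  μ.supp01 p

/-- Only the values of `F` on `[0,1]` matter, so `F` may be replaced by a continuous extension. -/
theorem YM.mom_measurable {T : ℝ} (μ : YM T) {F : ℝ → ℝ} (hF : ContinuousOn F (Icc 0 1)) :
    Measurable (μ.mom F) := by
  have hE : Continuous (IccExtend (zero_le_one (α := ℝ)) ((Icc (0:ℝ) 1).domRestrict F)) :=
    hF.domRestrict.Icc_extend'
  have e : μ.mom F = fun p =>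
      ∫ l, IccExtend (zero_le_one (α := ℝ)) ((Icc (0:ℝ) 1).domRestrict F) l ∂(μ.m p) := by
    ext p
    refine integral_congr_ae ?_
    filter_upwards [μ.ae_mem p] with l hl
    rw [IccExtend_of_mem _ _ hl]; rfl
  rw [e]
  exact μ.meas _ hE

theorem YM.mom_bound {T : ℝ} (μ : YM T) {F : ℝ → ℝ} (hF : ContinuousOn F (Icc 0 1)) :
    ∃ C : ℝ, ∀ p, |μ.mom F p| ≤ C := by
  obtain ⟨C, hC⟩ := isCompact_Icc.exists_bound_of_continuousOn hF
  refine ⟨C, fun p => ?_⟩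
  have := μ.prob p
  have h := norm_integral_le_of_norm_le_const (μ := μ.m p) (f := F) (C := C) (by
    filter_upwards [μ.ae_mem p] with l hl using hC l hl)
  simpa [YM.mom] using h

theorem YM.mom_nonneg {T : ℝ} (μ : YM T) {F : ℝ → ℝ} (hF : ContinuousOn F (Icc 0 1))
    (hpos : ∀ v ∈ Ioo (0:ℝ) 1, 0 < F v) (p : ℝ × ℝ) : 0 ≤ μ.mom F p := by
  refine integral_nonneg_of_ae ?_
  filter_upwards [μ.ae_mem p] with l hl
  have hl' : l ∈ closure (Ioo (0:ℝ) 1) := by rwa [closure_Ioo zero_ne_one]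
  have hw : ContinuousWithinAt F (Ioo 0 1) l := (hF l hl).mono Ioo_subset_Icc_self
  have := hw.mem_closure_image hl'
  exact closure_minimal (t := Ici (0:ℝ))
    (image_subset_iff.2 fun v hv => (hpos v hv).le) isClosed_Ici this

/-! ### The Riesz representation -/

section Abstract
variable {T C : ℝ} {a u F : ℝ × ℝ → ℝ}

/-- The functional `𝓘` as a supremum over the vector space `testSub T`, for general
coefficients `u = μ(ι)`, `F = μ(f)`, `a = μ(σ)`. -/
theorem iSup_test_eq (ha : Measurable a) (h0 : ∀ p, 0 ≤ a p)
    (h : ∀ φ : testSub T, MemLp (pxF φ.1) 2 (wt T a)) (hu : Measurable u) (huC : ∀ p, |u p| ≤ C)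
    (hF : Measurable F) (hFC : ∀ p, |F p| ≤ C) :
    ⨆ φ : TTest T, ENNReal.ofReal (- pair T u (ptF φ.toFun) - pair T F (pxF φ.toFun)
      - 1 / 2 * pair T (fun p => a p * pxF φ.toFun p) (pxF φ.toFun)) =
    ⨆ φ : testSub T, ENNReal.ofReal (ellL hu huC hF hFC φ - 1 / 2 * ‖gradL h φ‖ ^ 2) := by
  rw [← (testEquiv T).iSup_comp]
  refine iSup_congr fun φ => ?_
  have e : ‖gradL h φ‖ ^ 2 = pair T (fun p => a p * pxF φ.1 p) (pxF φ.1) := by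
    rw [← real_inner_self_eq_norm_sq]
    exact inner_toLp_wt ha h0 (h φ) (h φ)
  rw [e]
  rfl

/-- The weak equation `u_t + F_x = -(a P)_x` says that `P` represents `ellL` in `L²(a dt dx)`. -/
theorem ellL_eq_inner (ha : Measurable a) (h0 : ∀ p, 0 ≤ a p)
    (h : ∀ φ : testSub T, MemLp (pxF φ.1) 2 (wt T a)) (hu : Measurable u) (huC : ∀ p, |u p| ≤ C)
    (hF : Measurable F) (hFC : ∀ p, |F p| ≤ C) {P : ℝ × ℝ → ℝ} (hP : MemLp P 2 (wt T a)) :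
    (∀ φ : testSub T, ellL hu huC hF hFC φ = inner ℝ (hP.toLp P) (gradL h φ)) ↔
    ∀ φ : TTest T, - pair T u (ptF φ.toFun) - pair T F (pxF φ.toFun)
      = pair T (fun p => a p * P p) (pxF φ.toFun) := by
  have e : ∀ φ : testSub T, inner ℝ (hP.toLp P) (gradL h φ) =
      pair T (fun p => a p * P p) (pxF φ.1) := fun φ => inner_toLp_wt ha h0 hP (h φ)
  simp only [e]
  exact ⟨fun H φ => H ((testEquiv T).symm φ), fun H φ => H (testEquiv T φ)⟩

/-- For a weight bounded below by `r > 0`, a representation by `G ∈ L²` bounds the quadratic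
functional by `(2r)⁻¹ ‖G‖²`. -/
theorem le_of_L2_rep {r : ℝ} (hr : 0 < r) (ha : Measurable a) (hC : ∀ p, |a p| ≤ C)
    (hra : ∀ p : ℝ × ℝ, p.1 ∈ Icc (0:ℝ) T → r ≤ a p) {G : ℝ × ℝ → ℝ} (hG : Measurable G)
    (hGi : IntegrableOn (fun p => G p ^ 2) (Icc (0:ℝ) T ×ˢ (univ : Set ℝ)))
    {φ : ℝ × ℝ → ℝ} (hφ : Continuous φ) (hφc : HasCompactSupport φ) :
    pair T G φ - 1 / 2 * pair T (fun p => a p * φ p) φ ≤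
      ∫ p in Icc (0:ℝ) T ×ˢ (univ : Set ℝ), (2 * r)⁻¹ * G p ^ 2 := by
  have hm : MeasurableSet (Icc (0:ℝ) T ×ˢ (univ : Set ℝ)) :=
    measurableSet_Icc.prod MeasurableSet.univ
  have hφ2 := integrable_sq_of_compact hφ hφc
  have i1 : Integrable (fun p => G p * φ p)
      (volume.restrict (Icc (0:ℝ) T ×ˢ (univ : Set ℝ))) :=
    (memLp_strip hG hGi).integrable_mul (memLp_strip hφ.measurable hφ2.integrableOn)
  have i2 : Integrable (fun p => a p * φ p * φ p)
      (volume.restrict (Icc (0:ℝ) T ×ˢ (univ : Set ℝ))) := by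
    simp only [mul_assoc]
    exact integrable_bdd_mul ha hC (hφ.mul hφ) hφc.mul_left
  rw [pair, pair, ← integral_const_mul, ← integral_sub i1 (i2.const_mul _)]
  refine setIntegral_mono_on (i1.sub (i2.const_mul _)) (hGi.const_mul _) hm fun p hp => ?_
  have h1 := mul_le_mul_of_nonneg_right (hra p hp.1) (sq_nonneg (φ p))
  have h2 : (2 * r)⁻¹ * G p ^ 2 - (G p * φ p - 1 / 2 * (r * φ p ^ 2)) =
      (2 * r)⁻¹ * (G p - r * φ p) ^ 2 := by
    field_simp; ring
  have h3 : 0 ≤ (2 * r)⁻¹ * (G p - r * φ p) ^ 2 := by positivity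
  nlinarith

/-- The flux `a P` of `P ∈ 𝓓¹_a` is square integrable because `a` is bounded. -/
theorem integrableOn_flux_sq (ha : Measurable a) (h0 : ∀ p, 0 ≤ a p) (hC : ∀ p, |a p| ≤ C)
    {P : ℝ × ℝ → ℝ} (hP : InD1 T a P) :
    IntegrableOn (fun p => (a p * P p) ^ 2) (Icc (0:ℝ) T ×ˢ (univ : Set ℝ)) := by
  have h := hP.2.1.const_mul C
  refine Integrable.mono' h ((ha.mul hP.1).pow_const 2).aestronglyMeasurable
    (Eventually.of_forall fun p => ?_)
  rw [Real.norm_of_nonneg (sq_nonneg _)]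
  have h1 : a p ≤ C := (le_abs_self _).trans (hC p)
  have h2 := mul_le_mul_of_nonneg_right h1 (mul_nonneg (h0 p) (sq_nonneg (P p)))
  calc (a p * P p) ^ 2 = a p * (a p * P p ^ 2) := by ring
    _ ≤ _ := h2

theorem integrableOn_sq_of_le {r : ℝ} (hr : 0 < r)
    (hra : ∀ p : ℝ × ℝ, p.1 ∈ Icc (0:ℝ) T → r ≤ a p) {P : ℝ × ℝ → ℝ} (hP : InD1 T a P) :
    IntegrableOn (fun p => P p ^ 2) (Icc (0:ℝ) T ×ˢ (univ : Set ℝ)) := by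
  have hm : MeasurableSet (Icc (0:ℝ) T ×ˢ (univ : Set ℝ)) :=
    measurableSet_Icc.prod MeasurableSet.univ
  refine Integrable.mono' (hP.2.1.const_mul r⁻¹) (hP.1.pow_const 2).aestronglyMeasurable ?_
  filter_upwards [ae_restrict_mem hm] with p hp
  rw [Real.norm_of_nonneg (sq_nonneg _), ← div_eq_inv_mul, le_div_iff₀ hr, mul_comm]
  exact mul_le_mul_of_nonneg_right (hra p hp.1) (sq_nonneg _)

/-- Two square integrable fluxes with the same weak `x`-derivative coincide. -/
theorem flux_unique (ha : Measurable a) (h0 : ∀ p, 0 ≤ a p) (hC : ∀ p, |a p| ≤ C)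
    {P G : ℝ × ℝ → ℝ} (hP : InD1 T a P) (hG : Measurable G)
    (hGi : IntegrableOn (fun p => G p ^ 2) (Icc (0:ℝ) T ×ˢ (univ : Set ℝ)))
    (hw : ∀ φ : TTest T, pair T G (pxF φ.toFun) = pair T (fun p => a p * P p) (pxF φ.toFun)) :
    ∀ᵐ p ∂(volume.restrict (Icc (0:ℝ) T ×ˢ (univ : Set ℝ))), G p = a p * P p := by
  have m1 := memLp_strip hG hGi
  have m2 := memLp_strip (h := fun p => a p * P p) (ha.mul hP.1) (integrableOn_flux_sq ha h0 hC hP)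
  have key := ae_zero_of_weak (T := T) (h := fun p => G p - a p * P p)
    (hG.sub (ha.mul hP.1)) (m1.sub m2).integrable_sq (by
      intro φ
      have hx : Continuous (pxF φ.toFun) := continuous_dir φ.smooth (0, 1)
      have hc : HasCompactSupport (pxF φ.toFun) := compact_dir φ.cpt (0, 1)
      have m3 := memLp_strip (T := T) hx.measurable (integrable_sq_of_compact hx hc).integrableOn
      rw [pair_comm, pair_sub_right m3 m1 m2, sub_eq_zero, pair_comm T _ G, hw φ, pair_comm])
  filter_upwards [key] with p hp
  exact sub_eq_zero.1 hp

end Abstract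

/-- Riesz representation of `𝓘`: `𝓘(μ) < +∞` iff there is
`Ψ^μ ∈ 𝓓¹_{μ(σ)}` (represented by its gradient `P = Ψ^μ_x`) with
`μ(ι)_t + μ(f)_x = -(μ(σ)Ψ^μ_x)_x` weakly; `Ψ^μ` is then unique and
`𝓘(μ) = (1/2)‖Ψ^μ‖²_{𝓓¹_{μ(σ)}}`.  If moreover `μ(σ) ≥ r > 0` then `𝓘(μ) < +∞` iff
`μ(ι)_t + μ(f)_x = -G^μ_x` for some `G^μ ∈ L²`, in which case `Ψ^μ_x ∈ L²`,
`G^μ = μ(σ)Ψ^μ_x` and `𝓘(μ) = (1/2)∫∫ (G^μ)²/μ(σ)`. -/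
theorem calI_riesz (T : ℝ) (hT : 0 < T) (f σ : ℝ → ℝ)
    (hf : ∃ C : NNReal, LipschitzOnWith C f (Icc 0 1))
    (hσ : ContinuousOn σ (Icc 0 1))
    (hσpos : ∀ v ∈ Ioo (0:ℝ) 1, 0 < σ v)
    (μ : YM T) :
    (calI f σ T μ ≠ ⊤ ↔ ∃ P : ℝ × ℝ → ℝ, InD1 T (μ.mom σ) P ∧ calIEq f σ T μ P) ∧
    (∀ P P' : ℝ × ℝ → ℝ,
      InD1 T (μ.mom σ) P → calIEq f σ T μ P →
      InD1 T (μ.mom σ) P' → calIEq f σ T μ P' →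
      (∫ p in Icc (0:ℝ) T ×ˢ (univ : Set ℝ), μ.mom σ p * (P p - P' p) ^ 2) = 0) ∧
    (∀ P : ℝ × ℝ → ℝ, InD1 T (μ.mom σ) P → calIEq f σ T μ P →
      calI f σ T μ = ENNReal.ofReal (1 / 2 * pair T (fun p => μ.mom σ p * P p) P)) ∧
    ∀ r : ℝ, 0 < r → (∀ p : ℝ × ℝ, p.1 ∈ Icc (0:ℝ) T → r ≤ μ.mom σ p) →
      (calI f σ T μ ≠ ⊤ ↔
        ∃ G : ℝ × ℝ → ℝ, Measurable G ∧
          IntegrableOn (fun p => G p ^ 2) (Icc (0:ℝ) T ×ˢ (univ : Set ℝ)) ∧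
          ∀ φ : TTest T,
            - pair T (μ.mom (fun l => l)) (ptF φ.toFun) - pair T (μ.mom f) (pxF φ.toFun)
              = pair T G (pxF φ.toFun)) ∧
      ∀ P : ℝ × ℝ → ℝ, InD1 T (μ.mom σ) P → calIEq f σ T μ P →
        IntegrableOn (fun p => P p ^ 2) (Icc (0:ℝ) T ×ˢ (univ : Set ℝ)) ∧
        ∀ G : ℝ × ℝ → ℝ, Measurable G →
          IntegrableOn (fun p => G p ^ 2) (Icc (0:ℝ) T ×ˢ (univ : Set ℝ)) →
          (∀ φ : TTest T,
            - pair T (μ.mom (fun l => l)) (ptF φ.toFun) - pair T (μ.mom f) (pxF φ.toFun)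
              = pair T G (pxF φ.toFun)) →
          (∀ᵐ p ∂(volume.restrict (Icc (0:ℝ) T ×ˢ (univ : Set ℝ))),
            G p = μ.mom σ p * P p) ∧
          calI f σ T μ = ENNReal.ofReal
            (1 / 2 * ∫ p in Icc (0:ℝ) T ×ˢ (univ : Set ℝ), G p ^ 2 / μ.mom σ p) := by
  set a := μ.mom σ with ha_def
  have hid : ContinuousOn (fun l : ℝ => l) (Icc 0 1) := continuousOn_id
  have hfc : ContinuousOn f (Icc 0 1) := hf.choose_spec.continuousOn
  have ha : Measurable a := μ.mom_measurable hσ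
  have h0 : ∀ p, 0 ≤ a p := μ.mom_nonneg hσ hσpos
  obtain ⟨Ca, hCa⟩ := μ.mom_bound hσ
  have hu : Measurable (μ.mom fun l => l) := μ.mom_measurable hid
  have hF : Measurable (μ.mom f) := μ.mom_measurable hfc
  obtain ⟨C₁, hC₁⟩ := μ.mom_bound hid
  obtain ⟨C₂, hC₂⟩ := μ.mom_bound hfc
  have huC : ∀ p, |μ.mom (fun l => l) p| ≤ max C₁ C₂ := fun p => (hC₁ p).trans (le_max_left _ _)
  have hFC : ∀ p, |μ.mom f p| ≤ max C₁ C₂ := fun p => (hC₂ p).trans (le_max_right _ _)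
  have h : ∀ φ : testSub T, MemLp (pxF φ.1) 2 (wt T a) := fun φ =>
    memLp_dir ha h0 hCa φ.2.1 φ.2.2.1
  have hI : calI f σ T μ = ⨆ φ : testSub T,
      ENNReal.ofReal (ellL hu huC hF hFC φ - 1 / 2 * ‖gradL h φ‖ ^ 2) :=
    iSup_test_eq ha h0 h hu huC hF hFC
  have heq : ∀ {P : ℝ × ℝ → ℝ} (hP : MemLp P 2 (wt T a)),
      (∀ φ : testSub T, ellL hu huC hF hFC φ = inner ℝ (hP.toLp P) (gradL h φ)) ↔
        calIEq f σ T μ P := fun hP => ellL_eq_inner ha h0 h hu huC hF hFC hP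
  have hval : ∀ P : ℝ × ℝ → ℝ, InD1 T a P → calIEq f σ T μ P →
      calI f σ T μ = ENNReal.ofReal (1 / 2 * pair T (fun p => a p * P p) P) := by
    intro P hP hE
    rw [hI, iSup_eq_of_riesz (gradL h) _ (hP.mem_closure ha h0 hCa h)
      ((heq (hP.memLp ha h0)).2 hE), ← real_inner_self_eq_norm_sq, inner_toLp_wt ha h0]
  have hiff : calI f σ T μ ≠ ⊤ ↔ ∃ P : ℝ × ℝ → ℝ, InD1 T a P ∧ calIEq f σ T μ P := by
    constructor
    · intro hfin
      obtain ⟨Q, hQ, hQl⟩ := exists_riesz (gradL h) (ellL hu huC hF hFC) (calI f σ T μ).toReal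
        (fun φ => by
          rw [← ENNReal.ofReal_le_iff_le_toReal hfin, hI]
          exact le_iSup (fun φ => ENNReal.ofReal
            (ellL hu huC hF hFC φ - 1 / 2 * ‖gradL h φ‖ ^ 2)) φ)
      obtain ⟨P, hPm, hP, rfl⟩ := exists_InD1 ha h0 h hQ
      exact ⟨P, hP, (heq hPm).1 hQl⟩
    · rintro ⟨P, hP, hE⟩
      rw [hval P hP hE]
      exact ENNReal.ofReal_ne_top
  refine ⟨hiff, ?_, hval, ?_⟩
  · intro P P' hP hE hP' hE'
    have e := riesz_unique (gradL h) (hP.mem_closure ha h0 hCa h) (hP'.mem_closure ha h0 hCa h)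
      (fun φ => by
        rw [← (heq (hP.memLp ha h0)).2 hE φ, (heq (hP'.memLp ha h0)).2 hE' φ])
    have hsub := norm_toLp_wt_sq ha h0 ((hP.memLp ha h0).sub (hP'.memLp ha h0))
    rw [MemLp.toLp_sub (hP.memLp ha h0) (hP'.memLp ha h0), e, sub_self, norm_zero] at hsub
    simpa using hsub.symm
  · intro r hr hra
    refine ⟨⟨?_, ?_⟩, ?_⟩
    · intro hfin
      obtain ⟨P, hP, hE⟩ := hiff.1 hfin
      exact ⟨fun p => a p * P p, ha.mul hP.1, integrableOn_flux_sq ha h0 hCa hP, hE⟩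
    · rintro ⟨G, hG, hGi, hGw⟩
      refine ne_top_of_le_ne_top (ENNReal.ofReal_ne_top (r :=
        ∫ p in Icc (0:ℝ) T ×ˢ (univ : Set ℝ), (2 * r)⁻¹ * G p ^ 2)) (iSup_le fun φ => ?_)
      rw [hGw φ]
      exact ENNReal.ofReal_le_ofReal (le_of_L2_rep hr ha hCa hra hG hGi
        (continuous_dir φ.smooth (0, 1)) (compact_dir φ.cpt (0, 1)))
    · intro P hP hE
      refine ⟨integrableOn_sq_of_le hr hra hP, fun G hG hGi hGw => ?_⟩
      have hGP := flux_unique ha h0 hCa hP hG hGi fun φ => (hGw φ).symm.trans (hE φ)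
      refine ⟨hGP, ?_⟩
      rw [hval P hP hE, pair]
      congr 2
      refine integral_congr_ae ?_
      have hm : MeasurableSet (Icc (0:ℝ) T ×ˢ (univ : Set ℝ)) :=
        measurableSet_Icc.prod MeasurableSet.univ
      filter_upwards [hGP, ae_restrict_mem hm] with p h1 h2
      have hpos : a p ≠ 0 := (hr.trans_le (hra p h2.1)).ne'
      rw [h1]
      field_simp

end GammaSCL
end
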